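/- arXiv:2412.06123 — 3 statements merged into one kernel-verified Lean document; each statement's English description precedes it below -/
import Mathlib

section
/- Let F be an arbitrary field and n ≥ 3. Then l(F D_n) ≥ n; that is, there exists a generating set S of the group algebra F D_n of the dihedral group of order 2n with l(S) ≥ n. -/
/-- `Lk F S k` is the `F`-linear span of all products of at most `k` elements of `S`
(the empty product `1` has length `0`); equivalently `V ^ k` with `V = span F ({1} ∪ S)`. -/
noncomputable def Lk (F : Type*) [Field F] {A : Type*} [Ring A] [Algebra F A]
    (S : Set A) (k : ℕ) : Submodule F A :=
  (Submodule.span F ({1} ∪ S)) ^ k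

/-- The length of a generating set `S`: the least `k` with `Lk F S k = ⊤`. -/
noncomputable def lenS (F : Type*) [Field F] {A : Type*} [Ring A] [Algebra F A]
    (S : Set A) : ℕ :=
  sInf {k | Lk F S k = ⊤}

/-- `mAlg F A` is the maximal degree over all `τ ∈ A` of the minimal polynomial of `τ`. -/
noncomputable def mAlg (F A : Type*) [Field F] [Ring A] [Algebra F A] : ℕ :=
  sSup {d | ∃ τ : A, d = (minpoly F τ).natDegree}

/-!
The group elements form a basis of `F G`, so for `T ⊆ G` the length of `T` in `F G` is the least `k`
such that every element of `G` is a product of at most `k` elements of `T`. Take `T = {s, t}` with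
`s`, `t` adjacent reflections generating `D_n`. The Cayley graph is then a cycle through all `2n`
elements, and a ball of radius `k` in it is an arc of at most `2k + 1` vertices, which covers the
cycle exactly when `k ≥ n`. Hence `{s, t}` has length `n`.
-/

open scoped Pointwise
open Set DihedralGroup

section GroupAlgebra

lemma span_image_of_eq_top_iff {R M : Type*} [Semiring R] [Nontrivial R] [MulOneClass M]
    {U : Set M} : Submodule.span R (MonoidAlgebra.of R M '' U) = ⊤ ↔ U = univ := by
  refine ⟨fun h => eq_univ_of_forall fun m => ?_, ?_⟩
  · rw [← MonoidAlgebra.of_mem_span_of_iff (R := R), h]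
    exact Submodule.mem_top
  · rintro rfl
    rw [image_univ]
    exact (MonoidAlgebra.basis M R).span_eq

variable (F : Type*) [Field F]

lemma Lk_le_adjoin {A : Type*} [Ring A] [Algebra F A] (S : Set A) (k : ℕ) :
    Lk F S k ≤ (Algebra.adjoin F S).toSubmodule := by
  have hS : {1} ∪ S ⊆ ((Algebra.adjoin F S).toSubmonoid : Set A) :=
    union_subset (singleton_subset_iff.2 (one_mem _)) Algebra.subset_adjoin
  rw [Lk, Submodule.span_pow, Submodule.span_le]
  exact Submonoid.pow_subset hS

lemma adjoin_eq_top_of_Lk_eq_top {A : Type*} [Ring A] [Algebra F A] {S : Set A} {k : ℕ}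
    (h : Lk F S k = ⊤) : Algebra.adjoin F S = ⊤ :=
  Algebra.toSubmodule_eq_top.1 (top_le_iff.1 (h ▸ Lk_le_adjoin F S k))

variable {G : Type*} [Monoid G]

lemma Lk_image_of (T : Set G) (k : ℕ) :
    Lk F (MonoidAlgebra.of F G '' T) k =
      Submodule.span F (MonoidAlgebra.of F G '' (insert 1 T ^ k)) := by
  rw [Lk, Submodule.span_pow, image_pow, image_insert_eq, map_one, insert_eq]

lemma Lk_image_of_eq_top_iff {T : Set G} {k : ℕ} :
    Lk F (MonoidAlgebra.of F G '' T) k = ⊤ ↔ insert 1 T ^ k = univ := by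
  rw [Lk_image_of, span_image_of_eq_top_iff]

end GroupAlgebra

section AlternatingWalk

variable {G : Type*} [Group G]

/-- The walk `…, ts, t, 1, s, st, sts, …` in the Cayley graph of a group with respect to two
involutions `s` and `t`, indexed by `ℤ` with `1` at index `0`. -/
def alternatingWalk (s t : G) (m : ℤ) : G := (s * t) ^ (m / 2) * s ^ (m % 2)

variable (s t : G)

lemma alternatingWalk_zero : alternatingWalk s t 0 = 1 := by
  simp [alternatingWalk]

lemma alternatingWalk_two_mul (j : ℤ) : alternatingWalk s t (2 * j) = (s * t) ^ j := by
  simp [alternatingWalk]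

lemma alternatingWalk_two_mul_add_one (j : ℤ) :
    alternatingWalk s t (2 * j + 1) = (s * t) ^ j * s := by
  have hdiv : (2 * j + 1) / 2 = j := by omega
  have hmod : (2 * j + 1) % 2 = 1 := by omega
  rw [alternatingWalk, hdiv, hmod, zpow_one]

variable {s t}

lemma alternatingWalk_periodic {n : ℕ} (hn : (s * t) ^ n = 1) :
    Function.Periodic (alternatingWalk s t) (2 * n) := by
  intro m
  have hdiv : (m + 2 * n) / 2 = m / 2 + n := by omega
  rw [alternatingWalk, alternatingWalk, hdiv, Int.add_mul_emod_self_left, zpow_add, zpow_natCast,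
    hn, mul_one]

lemma alternatingWalk_mul_pair (hs : s * s = 1) (ht : t * t = 1) (m : ℤ) :
    ({alternatingWalk s t m * s, alternatingWalk s t m * t} : Set G) =
      {alternatingWalk s t (m - 1), alternatingWalk s t (m + 1)} := by
  obtain ⟨j, rfl | rfl⟩ := Int.even_or_odd' m
  · have hpred : 2 * j - 1 = 2 * (j - 1) + 1 := by ring
    have hmul_t : (s * t) ^ j * t = (s * t) ^ (j - 1) * s := by
      rw [← sub_add_cancel j 1, zpow_add_one, add_sub_cancel_right, mul_assoc, mul_assoc, ht,
        mul_one]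
    rw [hpred, alternatingWalk_two_mul, alternatingWalk_two_mul_add_one,
      alternatingWalk_two_mul_add_one, hmul_t, pair_comm]
  · have hsucc : 2 * j + 1 + 1 = 2 * (j + 1) := by ring
    rw [add_sub_cancel_right, hsucc, alternatingWalk_two_mul, alternatingWalk_two_mul,
      alternatingWalk_two_mul_add_one, mul_assoc, mul_assoc, hs, mul_one, zpow_add_one]

lemma alternatingWalk_smul_eq_image_Icc (hs : s * s = 1) (ht : t * t = 1) (m : ℤ) :
    alternatingWalk s t m • ({1, s, t} : Set G) = alternatingWalk s t '' Icc (m - 1) (m + 1) := by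
  have hIcc : Icc (m - 1) (m + 1) = {m, m - 1, m + 1} := by
    ext i
    simp only [mem_Icc, mem_insert_iff, mem_singleton_iff]
    omega
  rw [hIcc, image_insert_eq, image_pair, ← alternatingWalk_mul_pair hs ht, smul_set_insert,
    smul_set_insert, smul_set_singleton, smul_eq_mul, smul_eq_mul, smul_eq_mul, mul_one]

lemma image_alternatingWalk_mul (hs : s * s = 1) (ht : t * t = 1) (M : Set ℤ) :
    alternatingWalk s t '' M * {1, s, t} = alternatingWalk s t '' (M + Icc (-1) 1) := by
  rw [← smul_eq_mul, ← vadd_eq_add, ← iUnion_smul_set, biUnion_image, ← iUnion_vadd_set,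
    image_iUnion₂]
  refine iUnion₂_congr fun m _ => ?_
  rw [alternatingWalk_smul_eq_image_Icc hs ht, vadd_Icc, ← sub_eq_add_neg]

lemma involutionPair_pow_eq_image_Icc (hs : s * s = 1) (ht : t * t = 1) (k : ℕ) :
    ({1, s, t} : Set G) ^ k = alternatingWalk s t '' Icc (-k) k := by
  induction k with
  | zero =>
    rw [pow_zero, Nat.cast_zero, neg_zero, Icc_self, image_singleton, alternatingWalk_zero,
      singleton_one]
  | succ k ih =>
    rw [pow_succ, ih, image_alternatingWalk_mul hs ht, Icc_add_Icc (by omega) (by omega)]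
    push_cast
    rw [neg_add]

lemma ncard_involutionPair_pow_le (hs : s * s = 1) (ht : t * t = 1) (k : ℕ) :
    (({1, s, t} : Set G) ^ k).ncard ≤ 2 * k + 1 := by
  have hIcc : (Icc (-k : ℤ) k).ncard = 2 * k + 1 := by
    rw [← Finset.coe_Icc, ncard_coe_finset, Int.card_Icc]
    omega
  rw [involutionPair_pow_eq_image_Icc hs ht, ← hIcc]
  exact ncard_image_le (finite_Icc _ _)

lemma involutionPair_pow_eq_range (hs : s * s = 1) (ht : t * t = 1) {n : ℕ} (hn0 : n ≠ 0)
    (hn : (s * t) ^ n = 1) : ({1, s, t} : Set G) ^ n = range (alternatingWalk s t) := by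
  rw [involutionPair_pow_eq_image_Icc hs ht,
    ← (alternatingWalk_periodic hn).image_Icc (by omega) (-n)]
  congr 2
  ring

end AlternatingWalk

section Dihedral

lemma le_of_adjacentReflections_pow_eq_univ {n k : ℕ}
    (h : ({1, sr 0, sr 1} : Set (DihedralGroup n)) ^ k = univ) : n ≤ k := by
  have hcard := ncard_involutionPair_pow_le (sr_mul_self (0 : ZMod n)) (sr_mul_self 1) k
  rw [h, ncard_univ, nat_card] at hcard
  omega

variable (n : ℕ)

lemma sr_zero_mul_sr_one : (sr 0 * sr 1 : DihedralGroup n) = r 1 := by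
  rw [sr_mul_sr, sub_zero]

lemma alternatingWalk_adjacentReflections_surjective :
    Function.Surjective (alternatingWalk (sr 0 : DihedralGroup n) (sr 1)) := by
  rintro (i | i)
  · obtain ⟨j, rfl⟩ := ZMod.intCast_surjective i
    exact ⟨2 * j, by rw [alternatingWalk_two_mul, sr_zero_mul_sr_one, r_one_zpow]⟩
  · obtain ⟨j, hj⟩ := ZMod.intCast_surjective (-i)
    exact ⟨2 * j + 1, by rw [alternatingWalk_two_mul_add_one, sr_zero_mul_sr_one, r_one_zpow,
      r_mul_sr, hj, zero_sub, neg_neg]⟩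

variable [NeZero n]

lemma adjacentReflections_pow_eq_univ :
    ({1, sr 0, sr 1} : Set (DihedralGroup n)) ^ n = univ := by
  have hrot : (sr 0 * sr 1 : DihedralGroup n) ^ n = 1 := by
    rw [sr_zero_mul_sr_one, r_one_pow_n]
  rw [involutionPair_pow_eq_range (sr_mul_self 0) (sr_mul_self 1) (NeZero.ne n) hrot,
    (alternatingWalk_adjacentReflections_surjective n).range_eq]

variable (F : Type*) [Field F]

lemma isLeast_Lk_adjacentReflections_eq_top :
    IsLeast {k | Lk F (MonoidAlgebra.of F (DihedralGroup n) '' {sr 0, sr 1}) k = ⊤} n :=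
  ⟨(Lk_image_of_eq_top_iff F).2 (adjacentReflections_pow_eq_univ n),
    fun _ hk => le_of_adjacentReflections_pow_eq_univ ((Lk_image_of_eq_top_iff F).1 hk)⟩

end Dihedral

theorem stmt_16_general (F : Type*) [Field F] (n : ℕ) [NeZero n] :
    ∃ S : Set (MonoidAlgebra F (DihedralGroup n)),
      Algebra.adjoin F S = ⊤ ∧ lenS F S = n :=
  have hleast := isLeast_Lk_adjacentReflections_eq_top n F
  ⟨_, adjoin_eq_top_of_Lk_eq_top F hleast.1, hleast.csInf_eq⟩

theorem stmt_16 (F : Type*) [Field F] (n : ℕ) (hn : 3 ≤ n) :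
    ∃ S : Set (MonoidAlgebra F (DihedralGroup n)),
      Algebra.adjoin F S = ⊤ ∧ n ≤ lenS F S := by
  have : NeZero n := ⟨by omega⟩
  obtain ⟨S, hgen, hlen⟩ := stmt_16_general F n
  exact ⟨S, hgen, hlen.ge⟩
end

section
/- Let F be a field and A a finite-dimensional associative unital F-algebra with dim_F A ≤ m(A) + 4 and m(A) ≥ 3. Then l(A) ≤ m(A); that is, every generating set S of A satisfies l(S) ≤ m(A). -/
/-!
Let `V = span ({1} ∪ S)`, so that `Lk F S k = V ^ k`, and let `l = lenS F S`. Up to `l` the chain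
`V ^ 0 < V ^ 1 < ⋯` is strict. Suppose that a step `V ^ k < V ^ (k + 1)` before the last one has
codimension one, and choose `v ∈ V` with `v V ^ k ≰ V ^ k`, so that `V ^ (k + 1) = V ^ k + v V ^ k`.
Multiplying this by `V` on the right gives `V ^ (k + 2) = V ^ (k + 1) + v² V ^ k`. As this step is
strict, `v² V ^ (k - 1) ≰ V ^ k`, and therefore `V ^ (k + 1) = V ^ k + v² V ^ (k - 1)`: a factor `V`
has been traded for a factor `v`. After `k` trades `V ^ (k + 1) = V ^ k + F v ^ (k + 1)`, and then
`V ^ l = V ^ (l - 1) + F v ^ l` as well. Hence `1, v, …, v ^ l` are linearly independent and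
`l < m(A)`. If no step before the last one has codimension one, then `2 l ≤ dim A`.
Finally, `dim A ≤ m(A) + 4 ≤ 2 m(A) + 1` because `m(A) ≥ 3`.
-/

lemma sup_eq_of_covBy_of_not_le {α : Type*} [SemilatticeSup α] {u w c : α} (h : u ⋖ w)
    (hcw : c ≤ w) (hcu : ¬ c ≤ u) : u ⊔ c = w :=
  (h.eq_or_eq le_sup_left (sup_le h.le hcw)).resolve_left fun heq => hcu (sup_eq_left.mp heq)

section IdemSemiring

variable {α : Type*} [IdemSemiring α] {a b x : α} {k : ℕ}

lemma pow_add_two_le_pow_succ_add_mul (ha : a ≤ x) (hb : b ≤ x ^ k)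
    (h : x ^ (k + 1) ≤ x ^ k + a * b) : x ^ (k + 2) ≤ x ^ (k + 1) + a * (a * b) := by
  have hbx : b * x ≤ x ^ k + a * b := calc
    b * x ≤ x ^ k * x := mul_le_mul_left hb x
    _ = x ^ (k + 1) := (pow_succ x k).symm
    _ ≤ x ^ k + a * b := h
  have hax : a * x ^ k ≤ x ^ (k + 1) := pow_succ' x k ▸ mul_le_mul_left ha (x ^ k)
  calc x ^ (k + 2) = x ^ (k + 1) * x := pow_succ x (k + 1)
    _ ≤ (x ^ k + a * b) * x := mul_le_mul_left h x
    _ = x ^ (k + 1) + a * (b * x) := by rw [add_mul, ← pow_succ, mul_assoc]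
    _ ≤ x ^ (k + 1) + a * (x ^ k + a * b) := by gcongr
    _ = x ^ (k + 1) + a * x ^ k + a * (a * b) := by rw [mul_add, add_assoc]
    _ ≤ x ^ (k + 1) + x ^ (k + 1) + a * (a * b) := by gcongr
    _ = x ^ (k + 1) + a * (a * b) := by rw [add_idem]

lemma pow_succ_le_pow_add_pow_succ_of_le (ha : a ≤ x) (h : x ^ (k + 1) ≤ x ^ k + a ^ (k + 1))
    {n : ℕ} (hkn : k ≤ n) : x ^ (n + 1) ≤ x ^ n + a ^ (n + 1) := by
  induction n, hkn using Nat.le_induction with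
  | base => exact h
  | succ n _ ih =>
    rw [pow_succ' a (n + 1), pow_succ' a n]
    exact pow_add_two_le_pow_succ_add_mul ha (pow_le_pow_left' ha n) (pow_succ' a n ▸ ih)

lemma pow_succ_le_pow_add_of_covBy (hcov : x ^ k ⋖ x ^ (k + 1)) (hb : b ≤ x ^ (k + 1))
    (hb' : ¬ b ≤ x ^ k) : x ^ (k + 1) ≤ x ^ k + b :=
  (sup_eq_of_covBy_of_not_le hcov hb hb').ge.trans_eq (add_eq_sup _ _).symm

lemma not_mul_mul_le_pow_of_covBy (hcov : x ^ k ⋖ x ^ (k + 1)) (hlt : x ^ (k + 1) < x ^ (k + 2))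
    (ha : a ≤ x) (hb : b * x ≤ x ^ k) (h : ¬ a * (b * x) ≤ x ^ k) : ¬ a * (a * b) ≤ x ^ k := by
  intro hab
  have habx : a * (b * x) ≤ x ^ (k + 1) := pow_succ' x k ▸ mul_le_mul' ha hb
  have hspan : x ^ (k + 2) ≤ x ^ (k + 1) + a * (a * (b * x)) :=
    pow_add_two_le_pow_succ_add_mul ha hb (pow_succ_le_pow_add_of_covBy hcov habx h)
  have haabx : a * (a * (b * x)) ≤ x ^ (k + 1) := by
    simpa only [mul_assoc, pow_succ] using mul_le_mul_left hab x
  exact hlt.not_ge (hspan.trans (add_le le_rfl haabx))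

lemma not_pow_succ_le_pow_of_covBy (hcov : x ^ k ⋖ x ^ (k + 1)) (hlt : x ^ (k + 1) < x ^ (k + 2))
    (ha : a ≤ x) (h : ¬ a * x ^ k ≤ x ^ k) : ¬ a ^ (k + 1) ≤ x ^ k := by
  have trade : ∀ i j, i + j = k → ¬ a ^ (i + 1) * x ^ j ≤ x ^ k := by
    intro i
    induction i with
    | zero =>
      rintro j rfl
      simpa using h
    | succ i ih =>
      intro j hij
      have hle : a ^ i * x ^ j * x ≤ x ^ k := calc
        a ^ i * x ^ j * x ≤ x ^ i * x ^ j * x := by gcongr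
        _ = x ^ k := by rw [← pow_add, ← pow_succ, ← hij]; congr 1; lia
      have hnot : ¬ a * (a ^ i * x ^ j * x) ≤ x ^ k := by
        simpa only [pow_succ' a i, pow_succ, mul_assoc] using ih (j + 1) (by lia)
      simpa only [pow_succ', mul_assoc] using not_mul_mul_le_pow_of_covBy hcov hlt ha hle hnot
  simpa using trade k 0 (add_zero k)

end IdemSemiring

section Powers

variable {R A : Type*}

lemma exists_pow_succ_notMem_of_covBy [CommSemiring R] [Semiring A] [Algebra R A]
    {V : Submodule R A} {k n : ℕ} (hcov : V ^ k ⋖ V ^ (k + 1)) (hlt : V ^ (k + 1) < V ^ (k + 2))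
    (hkn : k ≤ n) (hn : V ^ n < V ^ (n + 1)) : ∃ v ∈ V, v ^ (n + 1) ∉ V ^ n := by
  obtain ⟨v, hv, hvk⟩ : ∃ v ∈ V, ¬ (R ∙ v) * V ^ k ≤ V ^ k := by
    by_contra! h
    refine hcov.lt.not_ge ?_
    rw [pow_succ', Submodule.mul_le]
    exact fun v hv q hq => h v hv (Submodule.mul_mem_mul (Submodule.mem_span_singleton_self v) hq)
  refine ⟨v, hv, fun hmem => hn.not_ge ?_⟩
  have hvV : R ∙ v ≤ V := (Submodule.span_singleton_le_iff_mem v V).mpr hv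
  have hspan : V ^ (n + 1) ≤ V ^ n + (R ∙ v) ^ (n + 1) :=
    pow_succ_le_pow_add_pow_succ_of_le hvV (pow_succ_le_pow_add_of_covBy hcov
      (pow_le_pow_left' hvV _) (not_pow_succ_le_pow_of_covBy hcov hlt hvV hvk)) hkn
  rw [Submodule.span_pow, Set.singleton_pow] at hspan
  exact hspan.trans (sup_le le_rfl ((Submodule.span_singleton_le_iff_mem _ _).mpr hmem))

lemma lt_natDegree_minpoly_of_pow_notMem [CommRing R] [Ring A] [Algebra R A] {V : Submodule R A}
    (h1 : 1 ≤ V) {v : A} (hv : v ∈ V) (hint : IsIntegral R v) {n : ℕ} (hn : v ^ (n + 1) ∉ V ^ n) :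
    n + 1 < (minpoly R v).natDegree := by
  by_contra! hle
  have hmem : v ^ (n + 1) ∈ Subalgebra.toSubmodule (Algebra.adjoin R {v}) :=
    pow_mem (Algebra.self_mem_adjoin_singleton R v) (n + 1)
  rw [← Submodule.span_range_natDegree_eq_adjoin (minpoly.monic hint) (minpoly.aeval R v)] at hmem
  refine hn (Submodule.span_le.mpr ?_ hmem)
  simp only [Finset.coe_image, Finset.coe_range, Set.image_subset_iff]
  intro i hi
  exact pow_le_pow_right' h1 (Nat.le_of_lt_succ (lt_of_lt_of_le hi hle))
    (Submodule.pow_mem_pow V hv i)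

lemma one_le_span_one_union (R : Type*) {A : Type*} [CommSemiring R] [Semiring A] [Algebra R A]
    (S : Set A) : 1 ≤ Submodule.span R ({1} ∪ S) :=
  Submodule.one_le.mpr (Submodule.subset_span (Or.inl rfl))

lemma adjoin_toSubmodule_le [CommSemiring R] [Semiring A] [Algebra R A] {S : Set A}
    {W : Submodule R A} (h1 : 1 ≤ W) (hmul : W * Submodule.span R S ≤ W) :
    Subalgebra.toSubmodule (Algebra.adjoin R S) ≤ W := by
  rw [Algebra.adjoin_eq_span, Submodule.span_le]
  intro a ha
  induction ha using Submonoid.closure_induction_right with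
  | one => exact Submodule.one_le.mp h1
  | mul_right a _ s hs ih => exact hmul (Submodule.mul_mem_mul ih (Submodule.subset_span hs))

end Powers

section Dimension

variable {K M : Type*} [DivisionRing K] [AddCommGroup M] [Module K M] [FiniteDimensional K M]

lemma finrank_add_two_le_of_not_covBy {U W : Submodule K M} (hlt : U < W) (hcov : ¬ U ⋖ W) :
    Module.finrank K U + 2 ≤ Module.finrank K W := by
  obtain ⟨X, hUX, hXW⟩ := (not_covBy_iff hlt).mp hcov
  have := Submodule.finrank_lt_finrank_of_lt hUX
  have := Submodule.finrank_lt_finrank_of_lt hXW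
  lia

lemma finrank_add_two_mul_le_of_not_covBy {W : ℕ → Submodule K M} {n : ℕ}
    (hlt : ∀ k < n, W k < W (k + 1)) (hcov : ∀ k < n, ¬ W k ⋖ W (k + 1)) :
    Module.finrank K (W 0) + 2 * n ≤ Module.finrank K (W n) := by
  induction n with
  | zero => simp
  | succ n ih =>
    have hn := ih (fun k hk => hlt k (by lia)) (fun k hk => hcov k (by lia))
    have hstep := finrank_add_two_le_of_not_covBy (hlt n n.lt_succ_self) (hcov n n.lt_succ_self)
    lia

end Dimension

section Length

variable {F A : Type*} [Field F] [Ring A] [Algebra F A] {S : Set A}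

lemma natDegree_minpoly_le_mAlg [FiniteDimensional F A] (v : A) :
    (minpoly F v).natDegree ≤ mAlg F A := by
  refine le_csSup ⟨Module.finrank F A, ?_⟩ ⟨v, rfl⟩
  rintro _ ⟨τ, rfl⟩
  exact minpoly.natDegree_le τ

lemma Lk_lt_Lk_succ (hS : Algebra.adjoin F S = ⊤) {k : ℕ} (hk : k < lenS F S) :
    Lk F S k < Lk F S (k + 1) := by
  have h1 := one_le_span_one_union F S
  refine lt_of_le_not_ge (pow_le_pow_right' h1 k.le_succ) fun hle => ?_
  have hmul : Lk F S k * Submodule.span F S ≤ Lk F S k := calc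
    Lk F S k * Submodule.span F S ≤ Lk F S k * Submodule.span F ({1} ∪ S) :=
      mul_le_mul_right (Submodule.span_mono Set.subset_union_right) _
    _ = Lk F S (k + 1) := (pow_succ _ k).symm
    _ ≤ Lk F S k := hle
  have htop : Lk F S k = ⊤ := by
    have := adjoin_toSubmodule_le (one_le_pow_of_one_le' h1 k) hmul
    rwa [hS, Algebra.top_toSubmodule, top_le_iff] at this
  exact Nat.notMem_of_lt_sInf hk htop

lemma lenS_lt_mAlg_of_covBy [FiniteDimensional F A] (hS : Algebra.adjoin F S = ⊤) {k : ℕ}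
    (hk : k + 1 < lenS F S) (hcov : Lk F S k ⋖ Lk F S (k + 1)) : lenS F S < mAlg F A := by
  obtain ⟨n, hn⟩ := Nat.exists_eq_add_one_of_ne_zero (Nat.ne_zero_of_lt hk)
  obtain ⟨v, hv, hvn⟩ := exists_pow_succ_notMem_of_covBy hcov (Lk_lt_Lk_succ hS hk)
    (show k ≤ n by lia) (Lk_lt_Lk_succ hS (by lia))
  calc lenS F S = n + 1 := hn
    _ < (minpoly F v).natDegree := lt_natDegree_minpoly_of_pow_notMem (one_le_span_one_union F S)
        hv (Algebra.IsIntegral.isIntegral v) hvn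
    _ ≤ mAlg F A := natDegree_minpoly_le_mAlg v

lemma two_mul_lenS_le_finrank_of_not_covBy [FiniteDimensional F A] (hS : Algebra.adjoin F S = ⊤)
    (hcov : ∀ k, k + 1 < lenS F S → ¬ Lk F S k ⋖ Lk F S (k + 1)) :
    2 * lenS F S ≤ Module.finrank F A := by
  cases hn : lenS F S with
  | zero => exact Nat.zero_le _
  | succ n =>
    have hlt : ∀ k ≤ n, Lk F S k < Lk F S (k + 1) := fun k hk => Lk_lt_Lk_succ hS (by lia)
    have hfirst : Module.finrank F (Lk F S 0) = 1 := by
      have : Nontrivial A :=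
        (Submodule.nontrivial_iff F).mp (nontrivial_of_lt _ _ (hlt 0 n.zero_le))
      rw [Lk, pow_zero, Submodule.one_eq_span, finrank_span_singleton one_ne_zero]
    have hsteps := finrank_add_two_mul_le_of_not_covBy
      (fun k hk => hlt k hk.le) (fun k hk => hcov k (by lia))
    have hlast : Module.finrank F (Lk F S n) < Module.finrank F A :=
      Submodule.finrank_lt ((hlt n le_rfl).trans_le le_top).ne
    lia

end Length

theorem stmt_17_general (F A : Type*) [Field F] [Ring A] [Algebra F A] [FiniteDimensional F A]
    (S : Set A) (hS : Algebra.adjoin F S = ⊤) :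
    lenS F S ≤ max (mAlg F A - 1) (Module.finrank F A / 2) := by
  by_cases hcov : ∃ k, k + 1 < lenS F S ∧ Lk F S k ⋖ Lk F S (k + 1)
  · obtain ⟨k, hk, hcovk⟩ := hcov
    exact le_max_of_le_left (Nat.le_sub_one_of_lt (lenS_lt_mAlg_of_covBy hS hk hcovk))
  · push Not at hcov
    have := two_mul_lenS_le_finrank_of_not_covBy hS hcov
    exact le_max_of_le_right (by lia)

theorem stmt_17 (F A : Type*) [Field F] [Ring A] [Algebra F A] [FiniteDimensional F A]
    (hd : Module.finrank F A ≤ mAlg F A + 4) (hm : 3 ≤ mAlg F A)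
    (S : Set A) (hS : Algebra.adjoin F S = ⊤) :
    lenS F S ≤ mAlg F A :=
  (stmt_17_general F A S hS).trans (by lia)
end

section
/- Let n ≥ 3 and let F be a field whose characteristic does not divide 2n. Then the length of the group algebra F D_n of the dihedral group of order 2n equals n; precisely, every generating set S of F D_n satisfies l(S) ≤ n, and there exists a generating set with l(S) = n. -/
/-!
Let `U` be the span of `1` and `S`, so that `L_k = U ^ k`.

**Upper bound.** Suppose `L_n ≠ ⊤`. If one layer `L_{j+1} / L_j` is at most one-dimensional, then so
is the next. As `dim F D_n = 2n`, a dimension count makes `L_n / L_{n-1}` one-dimensional. Then a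
nonzero functional `f` on `L_{n+1} / L_n` has rank one: `f (u_1 ⋯ u_{n+1})` is a multiple of
`β u_1 ⋯ β u_{n+1}` for a linear form `β`. With `Y₀` the kernel of `β` on `U`, any `x ∈ U` with
`β x ≠ 0` gives a power `x ^ (n + 1)` outside the span of the words of length `n + 1` that contain a
letter from `Y₀`.

The algebra `F D_n` embeds in `End V × F × F`, where `V` is the `n`-dimensional permutation
representation on the vertices of the `n`-gon and the two factors `F` are linear characters `ε₁`,
`ε₂` with value `-1` at the reflection `sr 0`. If `P` is the characteristic polynomial of `x` on
`V` evaluated at `x`, then `P`, `x P` and `P y`, for `y ∈ Y₀`, die on `V` and so are linearly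
dependent; this forces `ε₁ y = ε₂ y`. Put `Y = Y₀ ∩ ker ε₁`, so that `U = ⟨1, x⟩ + Y`.

Let `W_j` be the span of the words in `U` with `j + 1` letters, at least one of them from `Y`.
If `W_{n+1} = W_n`, then `W_n` is a two-sided ideal with commutative quotient. Such a quotient of
`F D_n` has dimension at most `4 ≤ n + 1`, so `x ^ (n + 1)` lies in `W_n + L_n`; as `1 ∈ Y₀`, this
contradicts the choice of `x`. Otherwise the dimension count makes `W_n / W_{n-1}` one-dimensional,
and an exchange argument yields `z ∈ U` and `y ∈ Y` with `z ^ n y` or `y z ^ n` outside `W_{n-1}`.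
But if `p` is the characteristic polynomial of `z` on `V`, then `p(z) y = y p(z) = 0` because both
characters kill `y`; as `p` is monic of degree `n`, both elements do lie in `W_{n-1}`.

**Sharpness.** The Cayley graph of `D_n` for the two reflections `sr 0` and `sr 1` is a `2n`-cycle,
whose balls of radius `k < n` have at most `2k + 1 < 2n` elements.
-/

/-! ### Words with a distinguished letter -/

section WordFiltration

open Submodule

variable {R A : Type*} [CommSemiring R] [Semiring A] [Algebra R A] {U Y : Submodule R A}

/-- The span of the products of `j + 1` elements of `U`, at least one of which lies in `Y`
(this reading presupposes `Y ≤ U`): the words of length `j + 1` with a distinguished letter. -/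
def wordFilt (U Y : Submodule R A) : ℕ → Submodule R A
  | 0 => Y
  | j + 1 => U * wordFilt U Y j ⊔ wordFilt U Y j * U

lemma mul_wordFilt_le (j : ℕ) : U * wordFilt U Y j ≤ wordFilt U Y (j + 1) :=
  le_sup_left

lemma wordFilt_mul_le (j : ℕ) : wordFilt U Y j * U ≤ wordFilt U Y (j + 1) :=
  le_sup_right

lemma wordFilt_monotone (h1 : 1 ≤ U) : Monotone (wordFilt U Y) :=
  monotone_nat_of_le_succ fun j => (le_mul_of_one_le_left' h1).trans (mul_wordFilt_le j)

lemma pow_mul_wordFilt_le (i j : ℕ) : U ^ i * wordFilt U Y j ≤ wordFilt U Y (i + j) := by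
  induction i with
  | zero => simp
  | succ i ih =>
    rw [pow_succ', mul_assoc, Nat.add_right_comm]
    exact (mul_le_mul_right ih U).trans (mul_wordFilt_le _)

lemma wordFilt_mul_pow_le (i j : ℕ) : wordFilt U Y j * U ^ i ≤ wordFilt U Y (j + i) := by
  induction i with
  | zero => simp
  | succ i ih =>
    rw [pow_succ, ← mul_assoc]
    exact (mul_le_mul_left ih U).trans (wordFilt_mul_le _)

lemma pow_mul_mul_pow_le_wordFilt (p q : ℕ) : U ^ p * Y * U ^ q ≤ wordFilt U Y (p + q) :=
  (mul_le_mul_left (pow_mul_wordFilt_le p 0) _).trans (wordFilt_mul_pow_le q p)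

lemma wordFilt_le {j : ℕ} {N : Submodule R A}
    (hN : ∀ p q, p + q = j → U ^ p * Y * U ^ q ≤ N) : wordFilt U Y j ≤ N := by
  induction j generalizing N with
  | zero => simpa [wordFilt] using hN 0 0 rfl
  | succ j ih =>
    refine sup_le (mul_le.2 fun u hu v hv => ?_) (mul_le.2 fun v hv u hu => ?_)
    · have h : wordFilt U Y j ≤ N.comap (LinearMap.mulLeft R u) := ih fun p q hpq w hw =>
        hN (p + 1) q (by omega) <| by
          rw [pow_succ', mul_assoc, mul_assoc, ← mul_assoc (U ^ p)]
          exact mul_mem_mul hu hw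
      exact h hv
    · have h : wordFilt U Y j ≤ N.comap (LinearMap.mulRight R u) := ih fun p q hpq w hw =>
        hN p (q + 1) (by omega) <| by
          rw [pow_succ, ← mul_assoc]
          exact mul_mem_mul hw hu
      exact h hv

lemma wordFilt_le_pow (hY : Y ≤ U) (j : ℕ) : wordFilt U Y j ≤ U ^ (j + 1) :=
  wordFilt_le fun p q hpq => by
    rw [← hpq, add_right_comm, pow_add, pow_succ]
    gcongr

lemma pow_le_wordFilt (hY : 1 ≤ Y) (j : ℕ) : U ^ j ≤ wordFilt U Y j := by
  simpa using (mul_le_mul_right hY (U ^ j)).trans (pow_mul_wordFilt_le j 0)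

lemma wordFilt_self (U : Submodule R A) (j : ℕ) : wordFilt U U j = U ^ (j + 1) :=
  (wordFilt_le_pow le_rfl j).antisymm (pow_mul_wordFilt_le j 0)

lemma wordFilt_mono_right {Y' : Submodule R A} (h : Y ≤ Y') (j : ℕ) :
    wordFilt U Y j ≤ wordFilt U Y' j :=
  wordFilt_le fun p q hpq => hpq ▸ (by gcongr : U ^ p * Y * U ^ q ≤ _).trans
    (pow_mul_mul_pow_le_wordFilt p q)

/- A word that starts with a letter from `Y` can give up its last letter and still contain a
letter from `Y`. -/
lemma mul_wordFilt_le_wordFilt_mul (hY : Y ≤ U) (j : ℕ) :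
    Y * wordFilt U Y j ≤ wordFilt U Y j * U :=
  calc Y * wordFilt U Y j ≤ Y * U ^ j * U := by
        rw [mul_assoc, ← pow_succ]; exact mul_le_mul_right (wordFilt_le_pow hY j) Y
    _ ≤ wordFilt U Y j * U := by
        gcongr; simpa using pow_mul_mul_pow_le_wordFilt (U := U) (Y := Y) 0 j

lemma wordFilt_mul_le_mul_wordFilt (hY : Y ≤ U) (j : ℕ) :
    wordFilt U Y j * Y ≤ U * wordFilt U Y j :=
  calc wordFilt U Y j * Y ≤ U * (U ^ j * Y) := by
        rw [← mul_assoc, ← pow_succ']; exact mul_le_mul_left (wordFilt_le_pow hY j) Y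
    _ ≤ U * wordFilt U Y j := by gcongr; exact pow_mul_wordFilt_le j 0

/- Expand `U = ⟨x⟩ + Y` in every factor: only the word `x ⋯ x` avoids the letters from `Y`. -/
lemma pow_succ_le_span_sup_wordFilt {x : A} (hU : span R {x} ⊔ Y = U) (k : ℕ) :
    U ^ (k + 1) ≤ span R {x ^ (k + 1)} ⊔ wordFilt U Y k := by
  induction k with
  | zero => simp [wordFilt, hU]
  | succ k ih =>
    have hx : span R {x ^ (k + 1)} ≤ U ^ (k + 1) := (span_singleton_le_iff_mem _ _).2 <|
      pow_mem_pow _ (hU ▸ mem_sup_left (mem_span_singleton_self x)) _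
    calc U ^ (k + 2) ≤ U * (span R {x ^ (k + 1)} ⊔ wordFilt U Y k) := by
          rw [pow_succ']; gcongr
      _ = span R {x ^ (k + 2)} ⊔ Y * span R {x ^ (k + 1)} ⊔ U * wordFilt U Y k := by
          rw [Submodule.mul_sup]; nth_rw 1 [← hU]
          rw [Submodule.sup_mul, span_mul_span, Set.singleton_mul_singleton, ← pow_succ']
      _ ≤ span R {x ^ (k + 2)} ⊔ wordFilt U Y (k + 1) := by
          refine sup_le (sup_le le_sup_left (le_sup_of_le_right ?_))
            (le_sup_of_le_right (mul_wordFilt_le k))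
          simpa using (mul_le_mul_right hx Y).trans
            ((pow_mul_mul_pow_le_wordFilt (U := U) 0 (k + 1)).trans' (by simp))

end WordFiltration

/-! ### Thin layers of a filtration -/

section ThinLayer

open Submodule LinearMap

variable {F M : Type*} [Field F] [AddCommGroup M] [Module F M] {P Q : Submodule F M}

lemma span_singleton_sup_inf_ker {x : M} {g : M →ₗ[F] F} (hx : x ∈ Q) (hgx : g x ≠ 0) :
    span F {x} ⊔ Q ⊓ ker g = Q := by
  refine le_antisymm (sup_le ((span_singleton_le_iff_mem _ _).2 hx) inf_le_left) fun v hv => ?_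
  refine mem_sup.2 ⟨(g v / g x) • x, smul_mem _ _ (mem_span_singleton_self x),
    v - (g v / g x) • x, ⟨sub_mem hv (smul_mem _ _ hx), ?_⟩, by abel⟩
  simp [hgx]

/-- The quotient of `Q` by `Q ⊓ P` is at most one-dimensional. It is applied to consecutive terms
`P ≤ Q` of a filtration. -/
def IsThinLayer (P Q : Submodule F M) : Prop :=
  ∃ w ∈ Q, Q ≤ P ⊔ span F {w}

/-- The linear form `θ` reads off the coordinate of an element of `Q` modulo `P` with respect to
the single basis vector `w` of the layer. -/
structure IsLayerCoord (P Q : Submodule F M) (w : M) (θ : M →ₗ[F] F) : Prop where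
  mem : w ∈ Q
  le_ker : P ≤ ker θ
  apply_eq_one : θ w = 1
  sub_smul_mem : ∀ v ∈ Q, v - θ v • w ∈ P

lemma IsThinLayer.exists_isLayerCoord (h : IsThinLayer P Q) (hQP : ¬ Q ≤ P) :
    ∃ w θ, IsLayerCoord P Q w θ := by
  obtain ⟨w, hw, hQ⟩ := h
  have hwP : w ∉ P := fun hwP =>
    hQP (hQ.trans (sup_le le_rfl ((span_singleton_le_iff_mem _ _).2 hwP)))
  obtain ⟨g, hgw, hgP⟩ := exists_le_ker_of_notMem hwP
  refine ⟨w, (g w)⁻¹ • g, hw, fun v hv => ?_, by simp [hgw], fun v hv => ?_⟩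
  · simp [show g v = 0 from hgP hv]
  · obtain ⟨p, hp, _, hc, rfl⟩ := mem_sup.1 (hQ hv)
    obtain ⟨c, rfl⟩ := mem_span_singleton.1 hc
    have hc : ((g w)⁻¹ • g) (p + c • w) = c := by simp [show g p = 0 from hgP hp, hgw, mul_comm c]
    simpa only [hc, add_sub_cancel_right] using hp

lemma isThinLayer_of_forall_le_ker {w : M} (hw : w ∈ Q)
    (h : ∀ f : M →ₗ[F] F, P ≤ ker f → f w = 0 → Q ≤ ker f) : IsThinLayer P Q := by
  refine ⟨w, hw, fun v hv => ?_⟩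
  by_contra hvw
  obtain ⟨f, hfv, hf⟩ := exists_le_ker_of_notMem hvw
  exact hfv (h f (le_sup_left.trans hf) (hf (mem_sup_right (mem_span_singleton_self w))) hv)

lemma finrank_add_two_le_of_not_isThinLayer [FiniteDimensional F M] (hPQ : P ≤ Q)
    (h : ¬ IsThinLayer P Q) : Module.finrank F P + 2 ≤ Module.finrank F Q := by
  have exists_notMem (w : M) (hw : w ∈ Q) : ∃ v ∈ Q, v ∉ P ⊔ span F {w} := by
    by_contra! hQ
    exact h ⟨w, hw, hQ⟩
  obtain ⟨w, hw, hwP⟩ := exists_notMem 0 Q.zero_mem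
  obtain ⟨v, hv, hvw⟩ := exists_notMem w hw
  have lt_w : P < P ⊔ span F {w} :=
    left_lt_sup.2 fun hle => hwP (mem_sup_left (hle (mem_span_singleton_self w)))
  have lt_Q : P ⊔ span F {w} < Q :=
    (sup_le hPQ ((span_singleton_le_iff_mem _ _).2 hw)).lt_of_not_ge fun hle => hvw (hle hv)
  have := finrank_lt_finrank_of_lt lt_w
  have := finrank_lt_finrank_of_lt lt_Q
  omega

end ThinLayer

namespace IsLayerCoord

open Submodule LinearMap

variable {F A : Type*} [Field F] [Ring A] [Algebra F A] {U P Q : Submodule F A} {u v u' w : A}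
  {θ f : A →ₗ[F] F}

lemma apply_mul_left (hθ : IsLayerCoord P Q w θ) (hf : U * P ≤ ker f) (hu : u ∈ U) (hv : v ∈ Q) :
    f (u * v) = θ v * f (u * w) := by
  have h : f (u * (v - θ v • w)) = 0 := hf (mul_mem_mul hu (hθ.sub_smul_mem v hv))
  simpa [mul_sub, sub_eq_zero] using h

lemma apply_mul_right (hθ : IsLayerCoord P Q w θ) (hf : P * U ≤ ker f) (hu : u ∈ U) (hv : v ∈ Q) :
    f (v * u) = θ v * f (w * u) := by
  have h : f ((v - θ v • w) * u) = 0 := hf (mul_mem_mul (hθ.sub_smul_mem v hv) hu)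
  simpa [sub_mul, sub_eq_zero] using h

/- Both sides are `f (u * v * u')`. -/
lemma apply_mul_mul_apply_mul (hθ : IsLayerCoord P Q w θ) (hl : U * P ≤ Q) (hr : P * U ≤ Q)
    (hf : Q ≤ ker f) (hu : u ∈ U) (hv : v ∈ P) (hu' : u' ∈ U) :
    θ (u * v) * f (w * u') = θ (v * u') * f (u * w) := by
  rw [← hθ.apply_mul_right (hr.trans hf) hu' (hl (mul_mem_mul hu hv)), mul_assoc,
    hθ.apply_mul_left (hl.trans hf) hu (hr (mul_mem_mul hv hu'))]

lemma mul_le_ker (hθ : IsLayerCoord P Q w θ) (hf : U * P ≤ ker f) (h : ∀ u ∈ U, f (u * w) = 0) :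
    U * Q ≤ ker f :=
  mul_le.2 fun u hu v hv => by simp [hθ.apply_mul_left hf hu hv, h u hu]

lemma mul_le_ker' (hθ : IsLayerCoord P Q w θ) (hf : P * U ≤ ker f) (h : ∀ u ∈ U, f (w * u) = 0) :
    Q * U ≤ ker f :=
  mul_le.2 fun v hv u hu => by simp [hθ.apply_mul_right hf hu hv, h u hu]

end IsLayerCoord

section ThinWordLayer

open Submodule LinearMap

variable {F A : Type*} [Field F] [Ring A] [Algebra F A] {U Y : Submodule F A} {w x : A}
  {θ f : A →ₗ[F] F} {j : ℕ}

lemma le_of_span_pair_sup_eq (hU : span F {1, x} ⊔ Y = U) {N : Submodule F A} (h1 : 1 ∈ N)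
    (hx : x ∈ N) (hY : Y ≤ N) : U ≤ N :=
  hU ▸ sup_le (span_le.2 (Set.pair_subset h1 hx)) hY

lemma one_le_of_span_pair_sup_eq (hU : span F {1, x} ⊔ Y = U) : 1 ≤ U :=
  one_le.2 (hU ▸ mem_sup_left (subset_span (Set.mem_insert 1 {x})))

lemma mem_of_span_pair_sup_eq (hU : span F {1, x} ⊔ Y = U) : x ∈ U :=
  hU ▸ mem_sup_left (subset_span (Set.mem_insert_of_mem 1 (Set.mem_singleton x)))

lemma IsLayerCoord.wordFilt_succ_le_ker
    (hθ : IsLayerCoord (wordFilt U Y j) (wordFilt U Y (j + 1)) w θ)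
    (hf : wordFilt U Y (j + 1) ≤ ker f) (hl : ∀ u ∈ U, f (u * w) = 0)
    (hr : ∀ u ∈ U, f (w * u) = 0) : wordFilt U Y (j + 2) ≤ ker f :=
  sup_le (hθ.mul_le_ker ((mul_wordFilt_le j).trans hf) hl)
    (hθ.mul_le_ker' ((wordFilt_mul_le j).trans hf) hr)

lemma isThinLayer_wordFilt_succ_of_mul_wordFilt_le_ker (hU : span F {1, x} ⊔ Y = U)
    (hθ : IsLayerCoord (wordFilt U Y j) (wordFilt U Y (j + 1)) w θ)
    (hl : U * wordFilt U Y j ≤ ker θ) :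
    IsThinLayer (wordFilt U Y (j + 1)) (wordFilt U Y (j + 2)) := by
  have hr : ¬ wordFilt U Y j * U ≤ ker θ := fun hr =>
    one_ne_zero (hθ.apply_eq_one.symm.trans (sup_le hl hr hθ.mem))
  obtain ⟨v₀, hv₀, u₀, hu₀, hθ₀⟩ : ∃ v ∈ wordFilt U Y j, ∃ u ∈ U, θ (v * u) ≠ 0 := by
    simpa [mul_le] using hr
  refine isThinLayer_of_forall_le_ker
    (wordFilt_mul_le _ (mul_mem_mul hθ.mem (mem_of_span_pair_sup_eq hU))) fun f hf hfwx => ?_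
  have huw (u : A) (hu : u ∈ U) : f (u * w) = 0 := by
    have h := hθ.apply_mul_mul_apply_mul (mul_wordFilt_le j) (wordFilt_mul_le j) hf hu hv₀ hu₀
    rw [show θ (u * v₀) = 0 from hl (mul_mem_mul hu hv₀), zero_mul, eq_comm] at h
    exact (mul_eq_zero.1 h).resolve_left hθ₀
  have hUw : U * wordFilt U Y (j + 1) ≤ ker f :=
    hθ.mul_le_ker ((mul_wordFilt_le j).trans hf) huw
  have hwu : U ≤ ker (f ∘ₗ mulLeft F w) := le_of_span_pair_sup_eq hU
    (by simpa using hf hθ.mem) hfwx fun y hy => hUw <|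
      wordFilt_mul_le_mul_wordFilt (hU ▸ le_sup_right) _ (mul_mem_mul hθ.mem hy)
  exact hθ.wordFilt_succ_le_ker hf huw fun u hu => hwu hu

lemma isThinLayer_wordFilt_succ_of_wordFilt_mul_le_ker (hU : span F {1, x} ⊔ Y = U)
    (hθ : IsLayerCoord (wordFilt U Y j) (wordFilt U Y (j + 1)) w θ)
    (hr : wordFilt U Y j * U ≤ ker θ) :
    IsThinLayer (wordFilt U Y (j + 1)) (wordFilt U Y (j + 2)) := by
  have hl : ¬ U * wordFilt U Y j ≤ ker θ := fun hl =>
    one_ne_zero (hθ.apply_eq_one.symm.trans (sup_le hl hr hθ.mem))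
  obtain ⟨u₀, hu₀, v₀, hv₀, hθ₀⟩ : ∃ u ∈ U, ∃ v ∈ wordFilt U Y j, θ (u * v) ≠ 0 := by
    simpa [mul_le] using hl
  refine isThinLayer_of_forall_le_ker
    (mul_wordFilt_le _ (mul_mem_mul (mem_of_span_pair_sup_eq hU) hθ.mem)) fun f hf hfxw => ?_
  have hwu (u : A) (hu : u ∈ U) : f (w * u) = 0 := by
    have h := hθ.apply_mul_mul_apply_mul (mul_wordFilt_le j) (wordFilt_mul_le j) hf hu₀ hv₀ hu
    rw [show θ (v₀ * u) = 0 from hr (mul_mem_mul hv₀ hu), zero_mul] at h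
    exact (mul_eq_zero.1 h).resolve_left hθ₀
  have hwU : wordFilt U Y (j + 1) * U ≤ ker f :=
    hθ.mul_le_ker' ((wordFilt_mul_le j).trans hf) hwu
  have huw : U ≤ ker (f ∘ₗ mulRight F w) := le_of_span_pair_sup_eq hU
    (by simpa using hf hθ.mem) hfxw fun y hy => hwU <|
      mul_wordFilt_le_wordFilt_mul (hU ▸ le_sup_right) _ (mul_mem_mul hy hθ.mem)
  exact hθ.wordFilt_succ_le_ker hf (fun u hu => huw hu) hwu

/- By the exchange rule a functional on the next layer is determined by one of its values. -/
lemma IsThinLayer.wordFilt_succ (hU : span F {1, x} ⊔ Y = U)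
    (h : IsThinLayer (wordFilt U Y j) (wordFilt U Y (j + 1))) :
    IsThinLayer (wordFilt U Y (j + 1)) (wordFilt U Y (j + 2)) := by
  by_cases hle : wordFilt U Y (j + 1) ≤ wordFilt U Y j
  · refine ⟨0, zero_mem _, le_sup_of_le_left (sup_le ?_ ?_)⟩
    · exact (mul_le_mul_right hle U).trans (mul_wordFilt_le j)
    · exact (mul_le_mul_left hle U).trans (wordFilt_mul_le j)
  obtain ⟨w, θ, hθ⟩ := h.exists_isLayerCoord hle
  by_cases hl : U * wordFilt U Y j ≤ ker θ
  · exact isThinLayer_wordFilt_succ_of_mul_wordFilt_le_ker hU hθ hl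
  by_cases hr : wordFilt U Y j * U ≤ ker θ
  · exact isThinLayer_wordFilt_succ_of_wordFilt_mul_le_ker hU hθ hr
  obtain ⟨u₁, hu₁, v₁, hv₁, hθ₁⟩ : ∃ u ∈ U, ∃ v ∈ wordFilt U Y j, θ (u * v) ≠ 0 := by
    simpa [mul_le] using hl
  obtain ⟨v₀, hv₀, u₀, hu₀, hθ₀⟩ : ∃ v ∈ wordFilt U Y j, ∃ u ∈ U, θ (v * u) ≠ 0 := by
    simpa [mul_le] using hr
  refine isThinLayer_of_forall_le_ker (wordFilt_mul_le _ (mul_mem_mul hθ.mem hu₀))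
    fun f hf hfwu₀ => ?_
  have exchange {u v u' : A} (hu : u ∈ U) (hv : v ∈ wordFilt U Y j) (hu' : u' ∈ U) :
      θ (u * v) * f (w * u') = θ (v * u') * f (u * w) :=
    hθ.apply_mul_mul_apply_mul (mul_wordFilt_le j) (wordFilt_mul_le j) hf hu hv hu'
  have huw (u : A) (hu : u ∈ U) : f (u * w) = 0 := by
    simpa [hfwu₀, hθ₀] using exchange hu hv₀ hu₀
  have hwu (u : A) (hu : u ∈ U) : f (w * u) = 0 := by
    simpa [huw u₁ hu₁, hθ₁] using exchange hu₁ hv₁ hu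
  exact hθ.wordFilt_succ_le_ker hf huw hwu

lemma IsThinLayer.wordFilt_of_le {k : ℕ} (hU : span F {1, x} ⊔ Y = U) (hjk : j ≤ k)
    (h : IsThinLayer (wordFilt U Y j) (wordFilt U Y (j + 1))) :
    IsThinLayer (wordFilt U Y k) (wordFilt U Y (k + 1)) :=
  Nat.le_induction h (fun _ _ ih => ih.wordFilt_succ hU) k hjk

lemma finrank_add_two_mul_le_finrank_wordFilt [FiniteDimensional F A] {m k : ℕ}
    (hU : span F {1, x} ⊔ Y = U)
    (h : ¬ IsThinLayer (wordFilt U Y m) (wordFilt U Y (m + 1))) (hk : k ≤ m + 1) :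
    Module.finrank F Y + 2 * k ≤ Module.finrank F (wordFilt U Y k) := by
  induction k with
  | zero => rfl
  | succ k ih =>
    have := finrank_add_two_le_of_not_isThinLayer
      (wordFilt_monotone (one_le_of_span_pair_sup_eq hU) (k.le_add_right 1))
      (mt (IsThinLayer.wordFilt_of_le hU (by omega : k ≤ m)) h)
    have := ih (by omega)
    omega

lemma isThinLayer_wordFilt [FiniteDimensional F A] {m : ℕ} (hU : span F {1, x} ⊔ Y = U)
    (hm : ¬ wordFilt U Y (m + 2) ≤ wordFilt U Y (m + 1))
    (hdim : Module.finrank F A < Module.finrank F Y + 2 * m + 3) :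
    IsThinLayer (wordFilt U Y m) (wordFilt U Y (m + 1)) := by
  by_contra h
  have hle := wordFilt_monotone (Y := Y) (one_le_of_span_pair_sup_eq hU) (by omega : m + 1 ≤ m + 2)
  have := finrank_lt_finrank_of_lt (hle.lt_of_not_ge hm)
  have := finrank_add_two_mul_le_finrank_wordFilt hU h le_rfl
  have := finrank_le (wordFilt U Y (m + 2))
  omega

end ThinWordLayer

/-! ### Powers outside the word filtration -/

section SurvivingPowers

open Submodule LinearMap

variable {F A : Type*} [Field F] [Ring A] [Algebra F A] {U Y : Submodule F A} {w x : A}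
  {θ f : A →ₗ[F] F} {m : ℕ}

lemma exists_span_pair_sup_eq_apply_ne_zero (hU : span F {1, x} ⊔ Y = U) {g : A →ₗ[F] F}
    (hg1 : g 1 = 0) (hg : ∃ u ∈ U, g u ≠ 0) : ∃ x', span F {1, x'} ⊔ Y = U ∧ g x' ≠ 0 := by
  by_cases hgx : g x = 0
  · obtain ⟨y, hy, hgy⟩ : ∃ y ∈ Y, g y ≠ 0 := by
      by_contra! hgY
      obtain ⟨u, hu, hgu⟩ := hg
      exact hgu (le_of_span_pair_sup_eq hU (N := ker g) hg1 hgx hgY hu)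
    refine ⟨x + y, le_antisymm (sup_le (span_le.2 (Set.pair_subset ?_ ?_)) ?_) ?_, by simpa [hgx]⟩
    · exact one_le.1 (one_le_of_span_pair_sup_eq hU)
    · exact add_mem (mem_of_span_pair_sup_eq hU) (hU ▸ mem_sup_right hy)
    · exact hU ▸ le_sup_right
    · refine le_of_span_pair_sup_eq hU ?_ ?_ le_sup_right
      · exact mem_sup_left (subset_span (Set.mem_insert _ _))
      · suffices x + y - y ∈ span F {1, x + y} ⊔ Y by simpa
        exact sub_mem (mem_sup_left (subset_span (Set.mem_insert_of_mem _ rfl)))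
          (mem_sup_right hy)
  · exact ⟨x, hU, hgx⟩

lemma IsLayerCoord.pow_mul_mem_ker (hU : span F {1, x} ⊔ Y = U)
    (hθ : IsLayerCoord (wordFilt U Y m) (wordFilt U Y (m + 1)) w θ)
    (hf : wordFilt U Y (m + 1) ≤ ker f) (hfxw : f (x * w) ≠ 0)
    (hxY : ∀ y ∈ Y, x ^ (m + 1) * y ∈ wordFilt U Y m) {s k : ℕ} (hsk : s + k = m + 1) :
    wordFilt U Y k ≤ ker (θ ∘ₗ mulLeft F (x ^ s)) := by
  have hx := mem_of_span_pair_sup_eq hU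
  induction k generalizing s with
  | zero => exact fun y hy => hθ.le_ker (by simpa [← hsk] using hxY y hy)
  | succ k ih =>
    have hmem {v : A} (hv : v ∈ wordFilt U Y k) : x ^ s * v ∈ wordFilt U Y m := by
      obtain rfl : s + k = m := by omega
      exact pow_mul_wordFilt_le s k (mul_mem_mul (pow_mem_pow U hx s) hv)
    have hright : wordFilt U Y k * U ≤ ker (θ ∘ₗ mulLeft F (x ^ s)) :=
      mul_le.2 fun v hv u hu => by
        have h := hθ.apply_mul_mul_apply_mul (mul_wordFilt_le m) (wordFilt_mul_le m) hf hx
          (hmem hv) hu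
        have hxv : θ (x * (x ^ s * v)) = 0 := by
          simpa [pow_succ', mul_assoc] using ih (s := s + 1) (by omega) hv
        simpa [hxv, hfxw, mul_assoc] using h
    refine sup_le (mul_le.2 fun u hu v hv => ?_) hright
    have hleft : U ≤ ker (θ ∘ₗ mulLeft F (x ^ s) ∘ₗ mulRight F v) :=
      le_of_span_pair_sup_eq hU (by simpa using hθ.le_ker (hmem hv))
        (by simpa [pow_succ, mul_assoc] using ih (s := s + 1) (by omega) hv) fun y hy =>
        hright (mul_wordFilt_le_wordFilt_mul (hU ▸ le_sup_right) k (mul_mem_mul hy hv))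
    exact hleft hu

lemma IsLayerCoord.mul_pow_mem_ker (hU : span F {1, x} ⊔ Y = U)
    (hθ : IsLayerCoord (wordFilt U Y m) (wordFilt U Y (m + 1)) w θ)
    (hf : wordFilt U Y (m + 1) ≤ ker f) (hfwx : f (w * x) ≠ 0)
    (hYx : ∀ y ∈ Y, y * x ^ (m + 1) ∈ wordFilt U Y m) {s k : ℕ} (hks : k + s = m + 1) :
    wordFilt U Y k ≤ ker (θ ∘ₗ mulRight F (x ^ s)) := by
  have hx := mem_of_span_pair_sup_eq hU
  induction k generalizing s with
  | zero =>
    obtain rfl : s = m + 1 := by omega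
    exact fun y hy => hθ.le_ker (hYx y hy)
  | succ k ih =>
    have hmem {v : A} (hv : v ∈ wordFilt U Y k) : v * x ^ s ∈ wordFilt U Y m := by
      obtain rfl : k + s = m := by omega
      exact wordFilt_mul_pow_le s k (mul_mem_mul hv (pow_mem_pow U hx s))
    have hleft : U * wordFilt U Y k ≤ ker (θ ∘ₗ mulRight F (x ^ s)) :=
      mul_le.2 fun u hu v hv => by
        have h := hθ.apply_mul_mul_apply_mul (mul_wordFilt_le m) (wordFilt_mul_le m) hf hu
          (hmem hv) hx
        have hvx : θ (v * x ^ s * x) = 0 := by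
          simpa [pow_succ, mul_assoc] using ih (s := s + 1) (by omega) hv
        rw [hvx, zero_mul] at h
        simpa [mul_assoc] using (mul_eq_zero.1 h).resolve_right hfwx
    refine sup_le hleft (mul_le.2 fun v hv u hu => ?_)
    have hright : U ≤ ker (θ ∘ₗ mulRight F (x ^ s) ∘ₗ mulLeft F v) :=
      le_of_span_pair_sup_eq hU (by simpa using hθ.le_ker (hmem hv))
        (by simpa [pow_succ', mul_assoc] using ih (s := s + 1) (by omega) hv) fun y hy =>
        hleft (wordFilt_mul_le_mul_wordFilt (hU ▸ le_sup_right) k (mul_mem_mul hv hy))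
    exact hright hu

lemma wordFilt_succ_le_of_pow_mul_mem (hU : span F {1, x} ⊔ Y = U)
    (h : IsThinLayer (wordFilt U Y m) (wordFilt U Y (m + 1)))
    (hl : ∀ z ∈ U, ∀ y ∈ Y, z ^ (m + 1) * y ∈ wordFilt U Y m)
    (hr : ∀ z ∈ U, ∀ y ∈ Y, y * z ^ (m + 1) ∈ wordFilt U Y m) :
    wordFilt U Y (m + 2) ≤ wordFilt U Y (m + 1) := by
  have hsucc (hle : wordFilt U Y (m + 1) ≤ wordFilt U Y m) :
      wordFilt U Y (m + 2) ≤ wordFilt U Y (m + 1) :=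
    sup_le_sup (mul_le_mul_right hle U) (mul_le_mul_left hle U)
  by_contra hle
  obtain ⟨w, θ, hθ⟩ := h.exists_isLayerCoord (mt hsucc hle)
  obtain ⟨a, ha, haN⟩ := SetLike.not_le_iff_exists.1 hle
  obtain ⟨f, hfa, hf⟩ := exists_le_ker_of_notMem haN
  have hfw : f w = 0 := hf hθ.mem
  have eq_zero_of_left : ∀ u ∈ U, f (u * w) = 0 := by
    by_contra! hne
    obtain ⟨x', hU', hx'⟩ := exists_span_pair_sup_eq_apply_ne_zero hU
      (g := f ∘ₗ mulRight F w) (by simpa) hne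
    have hθw := hθ.pow_mul_mem_ker hU' hf hx' (hl x' (mem_of_span_pair_sup_eq hU'))
      (zero_add _) hθ.mem
    simp [hθ.apply_eq_one] at hθw
  have eq_zero_of_right : ∀ u ∈ U, f (w * u) = 0 := by
    by_contra! hne
    obtain ⟨x', hU', hx'⟩ := exists_span_pair_sup_eq_apply_ne_zero hU
      (g := f ∘ₗ mulLeft F w) (by simpa) hne
    have hθw := hθ.mul_pow_mem_ker hU' hf hx' (hr x' (mem_of_span_pair_sup_eq hU'))
      (add_zero _) hθ.mem
    simp [hθ.apply_eq_one] at hθw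
  exact hfa (hθ.wordFilt_succ_le_ker hf eq_zero_of_left eq_zero_of_right ha)

end SurvivingPowers

section RankOne

open Submodule LinearMap

variable {F A : Type*} [Field F] [Ring A] [Algebra F A] {U Y : Submodule F A} {c w : A}
  {θ f : A →ₗ[F] F} {l : ℕ}

lemma IsLayerCoord.wordFilt_le_ker (hYU : Y ≤ U)
    (hθ : IsLayerCoord (U ^ l) (U ^ (l + 1)) w θ) (hf : U ^ (l + 1) ≤ ker f) (hc : c ∈ U)
    (hfcw : f (c * w) ≠ 0) (hY : ∀ y ∈ Y, f (w * y) = 0) : wordFilt U Y l ≤ ker θ := by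
  have exchange {v u : A} (hv : v ∈ U ^ l) (hu : u ∈ U) :
      θ (c * v) * f (w * u) = θ (v * u) * f (c * w) :=
    hθ.apply_mul_mul_apply_mul (pow_succ' U l).ge (pow_succ U l).ge hf hc hv hu
  refine wordFilt_le fun p q hpq => ?_
  induction q generalizing p with
  | zero =>
    obtain rfl : p = l := hpq
    rw [pow_zero, mul_one]
    exact mul_le.2 fun v hv y hy => by
      simpa [hY y hy, hfcw] using exchange hv (hYU hy)
  | succ q ih =>
    rw [pow_succ, ← mul_assoc]
    refine mul_le.2 fun v hv u hu => ?_
    have hcv : θ (c * v) = 0 := ih (p + 1) (by omega) <| by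
      rw [pow_succ', mul_assoc U, mul_assoc U]
      exact mul_mem_mul hc hv
    have hvl : v ∈ U ^ l := by
      rw [← hpq, ← add_assoc, add_right_comm, pow_add, pow_succ]
      exact (by gcongr : U ^ p * Y * U ^ q ≤ U ^ p * U * U ^ q) hv
    simpa [hcv, hfcw] using exchange hvl hu

/- A functional `f` on the layer `U ^ (l + 2)` has rank one, in the sense that
`f (u₁ * ⋯ * u_{l + 2})` is a multiple of `β u₁ * ⋯ * β u_{l + 2}` for `β := f (w * ·)`.
The submodule `Y` is the kernel of `β` on `U`. -/
lemma IsThinLayer.exists_pow_notMem_wordFilt (h1 : 1 ≤ U)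
    (h : IsThinLayer (U ^ l) (U ^ (l + 1))) (hl : ¬ U ^ (l + 2) ≤ U ^ (l + 1)) :
    ∃ x Y, 1 ≤ Y ∧ span F {x} ⊔ Y = U ∧ x ^ (l + 2) ∉ wordFilt U Y (l + 1) := by
  have hsucc (hle : U ^ (l + 1) ≤ U ^ l) : U ^ (l + 2) ≤ U ^ (l + 1) := by
    rw [pow_succ U (l + 1), pow_succ U l]; exact mul_le_mul_left hle U
  obtain ⟨w, θ, hθ⟩ := h.exists_isLayerCoord (mt hsucc hl)
  obtain ⟨a, ha, haN⟩ := SetLike.not_le_iff_exists.1 hl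
  obtain ⟨f, hfa, hf⟩ := exists_le_ker_of_notMem haN
  have hfl : U * U ^ l ≤ ker f := (pow_succ' U l).symm.trans_le hf
  have hfr : U ^ l * U ≤ ker f := (pow_succ U l).symm.trans_le hf
  obtain ⟨c, hc, hfcw⟩ : ∃ c ∈ U, f (c * w) ≠ 0 := by
    by_contra! h0
    exact hfa (hθ.mul_le_ker hfl h0 (pow_succ' U (l + 1) ▸ ha))
  obtain ⟨x, hx, hfwx⟩ : ∃ x ∈ U, f (w * x) ≠ 0 := by
    by_contra! h0
    exact hfa (hθ.mul_le_ker' hfr h0 (pow_succ U (l + 1) ▸ ha))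
  let Y := U ⊓ ker (f ∘ₗ mulLeft F w)
  have hYU : Y ≤ U := inf_le_left
  have hUY : span F {x} ⊔ Y = U := span_singleton_sup_inf_ker hx hfwx
  have hθY : wordFilt U Y l ≤ ker θ := hθ.wordFilt_le_ker hYU hf hc hfcw fun y hy => hy.2
  have hfY : wordFilt U Y (l + 1) ≤ ker f := by
    have hYl := wordFilt_le_pow hYU l
    refine sup_le (mul_le.2 fun u hu v hv => ?_) (mul_le.2 fun v hv u hu => ?_)
    · simp [hθ.apply_mul_left hfl hu (hYl hv), show θ v = 0 from hθY hv]
    · simp [hθ.apply_mul_right hfr hu (hYl hv), show θ v = 0 from hθY hv]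
  refine ⟨x, Y, one_le.2 ⟨one_le.1 h1, by simpa using hf hθ.mem⟩, hUY, fun hxY => hfa (hfY ?_)⟩
  exact (pow_succ_le_span_sup_wordFilt hUY (l + 1)).trans
    (sup_le ((span_singleton_le_iff_mem _ _).2 hxY) le_rfl) ha

end RankOne

/-! ### The upper bound for algebras in `End V × F × F` -/

section Generation

open Submodule LinearMap Polynomial Module

variable {R A : Type*} [CommRing R] [Ring A] [Algebra R A] {U N : Submodule R A}

lemma mul_mem_of_mul_le_of_adjoin_eq_top (hU : Algebra.adjoin R (U : Set A) = ⊤) (hN : U * N ≤ N)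
    (a : A) {v : A} (hv : v ∈ N) : a * v ∈ N := by
  have ha : a ∈ Algebra.adjoin R (U : Set A) := hU ▸ Algebra.mem_top
  induction ha using Algebra.adjoin_induction generalizing v with
  | mem u hu => exact hN (mul_mem_mul hu hv)
  | algebraMap c => simpa [Algebra.algebraMap_eq_smul_one] using N.smul_mem c hv
  | add a b _ _ ha hb => simpa [add_mul] using add_mem (ha hv) (hb hv)
  | mul a b _ _ ha hb => simpa [mul_assoc] using ha (hb hv)

lemma mul_mem_of_mul_le_of_adjoin_eq_top' (hU : Algebra.adjoin R (U : Set A) = ⊤) (hN : N * U ≤ N)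
    (a : A) {v : A} (hv : v ∈ N) : v * a ∈ N := by
  have ha : a ∈ Algebra.adjoin R (U : Set A) := hU ▸ Algebra.mem_top
  induction ha using Algebra.adjoin_induction generalizing v with
  | mem u hu => exact hN (mul_mem_mul hv hu)
  | algebraMap c => simpa [Algebra.algebraMap_eq_smul_one] using N.smul_mem c hv
  | add a b _ _ ha hb => simpa [mul_add] using add_mem (ha hv) (hb hv)
  | mul a b _ _ ha hb => simpa [mul_assoc] using hb (ha hv)

lemma pow_eq_top_of_pow_succ_le (h1 : 1 ≤ U) (hU : Algebra.adjoin R (U : Set A) = ⊤) {k : ℕ}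
    (hk : U ^ (k + 1) ≤ U ^ k) : U ^ k = ⊤ := by
  rw [pow_succ'] at hk
  exact eq_top_iff'.2 fun a => by
    simpa using mul_mem_of_mul_le_of_adjoin_eq_top hU hk a (one_le.1 (one_le_pow_of_one_le' h1 k))

lemma commute_of_le_span_pair {x : A} (hU : Algebra.adjoin R (U : Set A) = ⊤)
    (hx : U ≤ span R {1, x}) (a b : A) : Commute a b := by
  have htop : Algebra.adjoin R {x} = ⊤ := by
    have hle : span R {1, x} ≤ (Algebra.adjoin R {x}).toSubmodule := span_le.2 <|
      Set.pair_subset (one_mem (Algebra.adjoin R {x})) (Algebra.self_mem_adjoin_singleton R x)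
    exact top_le_iff.1 (hU ▸ Algebra.adjoin_le fun u hu => hle (hx hu))
  have hmem (c : A) : c ∈ Algebra.adjoin R {x} := htop ▸ Algebra.mem_top
  exact Algebra.commute_of_mem_adjoin_singleton_of_commute (hmem b)
    (Algebra.commute_of_mem_adjoin_self (hmem a)).symm

lemma aeval_mem_pow {x : A} (h1 : 1 ≤ U) (hx : x ∈ U) {k : ℕ} {q : R[X]} (hq : q.natDegree ≤ k) :
    aeval x q ∈ U ^ k := by
  rw [aeval_eq_sum_range' (Nat.lt_succ_of_le hq)]
  exact sum_mem fun i hi => smul_mem _ _ <|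
    pow_le_pow_right' h1 (Finset.mem_range_succ_iff.1 hi) (pow_mem_pow U hx i)

lemma aeval_sub_pow_succ_mem_pow {x : A} (h1 : 1 ≤ U) (hx : x ∈ U) {k : ℕ} {q : R[X]}
    (hq : q.IsMonicOfDegree (k + 1)) : aeval x q - x ^ (k + 1) ∈ U ^ k := by
  simpa using aeval_mem_pow h1 hx (Nat.lt_succ_iff.1 (hq.natDegree_sub_X_pow k.succ_ne_zero))

end Generation

section CommutativeQuotient

open Submodule LinearMap Polynomial Module

variable {F A : Type*} [Field F] [Ring A] [Algebra F A] [FiniteDimensional F A]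
  {U N : Submodule F A}

lemma exists_isMonicOfDegree_aeval_eq_zero {d : ℕ} (hd : finrank F A ≤ d) (x : A) :
    ∃ q : F[X], q.IsMonicOfDegree d ∧ aeval x q = 0 := by
  have hx : IsIntegral F x := .of_finite F x
  refine ⟨minpoly F x * X ^ (d - (minpoly F x).natDegree), ?_, by simp⟩
  have := minpoly.natDegree_le (A := F) x
  have hdeg : IsMonicOfDegree (minpoly F x) (minpoly F x).natDegree :=
    ⟨rfl, minpoly.monic hx⟩
  simpa only [Nat.add_sub_cancel' (this.trans hd)] using
    hdeg.mul (isMonicOfDegree_X_pow F (d - (minpoly F x).natDegree))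

lemma exists_isMonicOfDegree_aeval_mem {Y : Submodule F A} {x : A} {d : ℕ}
    (hab : ∀ (I : Ideal A) [I.IsTwoSided], (∀ a b : A ⧸ I, Commute a b) → finrank F (A ⧸ I) ≤ d)
    (hU : Algebra.adjoin F (U : Set A) = ⊤) (hxY : span F {1, x} ⊔ Y = U) (hY : Y ≤ N)
    (hl : U * N ≤ N) (hr : N * U ≤ N) : ∃ q : F[X], q.IsMonicOfDegree d ∧ aeval x q ∈ N := by
  let I : Ideal A :=
    { N with smul_mem' := fun a _ hv => mul_mem_of_mul_le_of_adjoin_eq_top hU hl a hv }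
  have : I.IsTwoSided := ⟨fun a hv => mul_mem_of_mul_le_of_adjoin_eq_top' hU hr a hv⟩
  let φ := Ideal.Quotient.mkₐ F I
  have hφU : Algebra.adjoin F (U.map φ.toLinearMap : Set (A ⧸ I)) = ⊤ := by
    rw [map_coe, AlgHom.coe_toLinearMap, ← AlgHom.map_adjoin, hU, Algebra.map_top,
      AlgHom.range_eq_top]
    exact Ideal.Quotient.mkₐ_surjective F I
  have hφx : U.map φ.toLinearMap ≤ span F {1, φ x} := by
    have hφY : Y.map φ.toLinearMap = ⊥ :=
      _root_.eq_bot_iff.2 fun _ ⟨y, hy, hφy⟩ => hφy ▸ Ideal.Quotient.eq_zero_iff_mem.2 (hY hy)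
    rw [← hxY, Submodule.map_sup, hφY, Submodule.map_span, Set.image_pair]
    simp
  obtain ⟨q, hq, hqx⟩ := exists_isMonicOfDegree_aeval_eq_zero
    (hab I (commute_of_le_span_pair hφU hφx)) (φ x)
  rw [aeval_algHom_apply] at hqx
  exact ⟨q, hq, Ideal.Quotient.eq_zero_iff_mem.1 hqx⟩

end CommutativeQuotient

section UpperBound

open Submodule LinearMap Polynomial Module

variable {F A : Type*} [Field F] [Ring A] [Algebra F A] {U Y : Submodule F A} {x y : A}

lemma exists_pow_notMem_wordFilt_of_pow_ne_top [FiniteDimensional F A] (h1 : 1 ≤ U)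
    (hU : Algebra.adjoin F (U : Set A) = ⊤) {m : ℕ} (hdim : finrank F A ≤ 2 * (m + 2))
    (hm : U ^ (m + 2) ≠ ⊤) :
    ∃ x Y, 1 ≤ Y ∧ span F {x} ⊔ Y = U ∧ x ^ (m + 3) ∉ wordFilt U Y (m + 2) := by
  have : Nontrivial A := not_subsingleton_iff_nontrivial.1 fun _ => hm (Subsingleton.elim _ _)
  have hU1 : ¬ U ≤ 1 := fun hle => hm <| pow_eq_top_of_pow_succ_le h1 hU <| by
    rw [pow_succ']; exact mul_le_of_le_one_left' hle
  have two_le_finrank : 2 ≤ finrank F U := by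
    have hlt := finrank_lt_finrank_of_lt (h1.lt_of_not_ge hU1)
    rwa [one_eq_span, finrank_span_singleton one_ne_zero] at hlt
  have hnot : ¬ U ^ (m + 3) ≤ U ^ (m + 2) := fun hle => hm (pow_eq_top_of_pow_succ_le h1 hU hle)
  have hthin : IsThinLayer (U ^ (m + 1)) (U ^ (m + 2)) := by
    have hU' : span F {1, (1 : A)} ⊔ U = U := by
      simpa [span_le] using one_le.1 h1
    simpa only [wordFilt_self] using isThinLayer_wordFilt (m := m) hU'
      (by simpa only [wordFilt_self] using hnot) (by omega)
  exact hthin.exists_pow_notMem_wordFilt h1 hnot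

variable {V : Type*} [AddCommGroup V] [Module F V] [FiniteDimensional F V]
  {ρ : A →ₐ[F] End F V} {ε₁ ε₂ : A →ₐ[F] F}

lemma isMonicOfDegree_charpoly (f : End F V) : IsMonicOfDegree f.charpoly (finrank F V) :=
  ⟨f.charpoly_natDegree, f.charpoly_monic⟩

lemma map_aeval_charpoly_eq_zero (ρ : A →ₐ[F] End F V) (z : A) :
    ρ (aeval z (ρ z).charpoly) = 0 := by
  rw [← aeval_algHom_apply, aeval_self_charpoly]

/- For `P = p(x)`, `p` the characteristic polynomial of `x` on `V`, the elements `P`, `x * P` and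
`P * y` die on `V`, so they are linearly dependent; but `x * P` has the leading term `x ^ (n + 1)`,
while `P` and `P * y` lie in `wordFilt U Y n`. -/
lemma apply_eq_apply_of_pow_notMem {n : ℕ} (hV : finrank F V = n)
    (hfaith : ∀ a, ρ a = 0 → ε₁ a = 0 → ε₂ a = 0 → a = 0) (h1 : 1 ≤ Y) (hYU : Y ≤ U)
    (hx : x ∈ U) (hxn : x ^ (n + 1) ∉ wordFilt U Y n) (hy : y ∈ Y) : ε₁ y = ε₂ y := by
  have h1U := h1.trans hYU
  let p := (ρ x).charpoly
  have hpn : p.IsMonicOfDegree n := hV ▸ isMonicOfDegree_charpoly (ρ x)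
  let P := aeval x p
  have hρP : ρ P = 0 := map_aeval_charpoly_eq_zero ρ x
  have hPn : P ∈ U ^ n := aeval_mem_pow h1U hx hpn.natDegree_eq.le
  have dependence : (ε₁ x - ε₂ x) • (P * y) - (ε₁ x * ε₂ y - ε₂ x * ε₁ y) • P
      = (ε₁ y - ε₂ y) • (x * P) := by
    refine sub_eq_zero.1 (hfaith _ ?_ ?_ ?_)
    · simp [hρP]
    · simp only [map_sub, map_smul, map_mul, smul_eq_mul]; ring
    · simp only [map_sub, map_smul, map_mul, smul_eq_mul]; ring
  have hmem : (ε₁ y - ε₂ y) • (x * P) ∈ wordFilt U Y n := by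
    rw [← dependence]
    exact sub_mem (smul_mem _ _ (pow_mul_wordFilt_le n 0 (mul_mem_mul hPn hy)))
      (smul_mem _ _ (pow_le_wordFilt h1 n hPn))
  by_contra hne
  have hxP : x * P ∈ wordFilt U Y n := (smul_mem_iff _ (sub_ne_zero.2 hne)).1 hmem
  have hsub : x * P - x ^ (n + 1) ∈ U ^ n := by
    have hXp : IsMonicOfDegree (X * p) (n + 1) := add_comm 1 n ▸ (isMonicOfDegree_X F).mul hpn
    simpa only [map_mul, aeval_X] using aeval_sub_pow_succ_mem_pow h1U hx hXp
  exact hxn (by simpa using sub_mem hxP (pow_le_wordFilt h1 n hsub))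

lemma pow_finrank_mul_mem_wordFilt {m : ℕ} (hV : finrank F V = m + 1)
    (hfaith : ∀ a, ρ a = 0 → ε₁ a = 0 → ε₂ a = 0 → a = 0) (h1 : 1 ≤ U) {z : A} (hz : z ∈ U)
    (hy : y ∈ Y) (hε₁ : ε₁ y = 0) (hε₂ : ε₂ y = 0) : z ^ (m + 1) * y ∈ wordFilt U Y m := by
  have hp := aeval_sub_pow_succ_mem_pow h1 hz (hV ▸ isMonicOfDegree_charpoly (ρ z))
  have hpy : aeval z (ρ z).charpoly * y = 0 :=
    hfaith _ (by simp [map_aeval_charpoly_eq_zero]) (by simp [hε₁]) (by simp [hε₂])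
  simpa [sub_mul, hpy] using pow_mul_wordFilt_le m 0 (mul_mem_mul hp hy)

lemma mul_pow_finrank_mem_wordFilt {m : ℕ} (hV : finrank F V = m + 1)
    (hfaith : ∀ a, ρ a = 0 → ε₁ a = 0 → ε₂ a = 0 → a = 0) (h1 : 1 ≤ U) {z : A} (hz : z ∈ U)
    (hy : y ∈ Y) (hε₁ : ε₁ y = 0) (hε₂ : ε₂ y = 0) : y * z ^ (m + 1) ∈ wordFilt U Y m := by
  have hp := aeval_sub_pow_succ_mem_pow h1 hz (hV ▸ isMonicOfDegree_charpoly (ρ z))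
  have hyp : y * aeval z (ρ z).charpoly = 0 :=
    hfaith _ (by simp [map_aeval_charpoly_eq_zero]) (by simp [hε₁]) (by simp [hε₂])
  simpa [mul_sub, hyp] using wordFilt_mul_pow_le m 0 (mul_mem_mul hy hp)

lemma pow_eq_top_of_finrank_le [FiniteDimensional F A] {n : ℕ} (hn : 2 ≤ n)
    (hdim : finrank F A ≤ 2 * n) (hV : finrank F V = n)
    (hfaith : ∀ a, ρ a = 0 → ε₁ a = 0 → ε₂ a = 0 → a = 0)
    (hab : ∀ (I : Ideal A) [I.IsTwoSided], (∀ a b : A ⧸ I, Commute a b) →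
      finrank F (A ⧸ I) ≤ n + 1)
    (h1 : 1 ≤ U) (hU : Algebra.adjoin F (U : Set A) = ⊤) : U ^ n = ⊤ := by
  obtain ⟨m, rfl⟩ : ∃ m, n = m + 2 := ⟨n - 2, by omega⟩
  by_contra hm
  obtain ⟨x, Y₀, h1Y₀, hxY₀, hxm⟩ := exists_pow_notMem_wordFilt_of_pow_ne_top h1 hU hdim hm
  have hx : x ∈ U := hxY₀ ▸ mem_sup_left (mem_span_singleton_self x)
  have hε (y : A) (hy : y ∈ Y₀) : ε₁ y = ε₂ y :=
    apply_eq_apply_of_pow_notMem hV hfaith h1Y₀ (hxY₀ ▸ le_sup_right) hx hxm hy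
  let Y := Y₀ ⊓ ker ε₁.toLinearMap
  have hxY : span F {1, x} ⊔ Y = U := by
    have h1Y : span F {1} ⊔ Y = Y₀ := span_singleton_sup_inf_ker (one_le.1 h1Y₀) (by simp)
    rw [span_insert, sup_comm (span F {1}), sup_assoc, h1Y, hxY₀]
  have hε₁ (y : A) (hy : y ∈ Y) : ε₁ y = 0 := hy.2
  have hε₂ (y : A) (hy : y ∈ Y) : ε₂ y = 0 := hε y hy.1 ▸ hy.2
  by_cases hle : wordFilt U Y (m + 3) ≤ wordFilt U Y (m + 2)
  · obtain ⟨q, hq, hqx⟩ := exists_isMonicOfDegree_aeval_mem hab hU hxY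
      (wordFilt_monotone h1 (Nat.zero_le (m + 2)) : Y ≤ wordFilt U Y (m + 2))
      ((mul_wordFilt_le _).trans hle) ((wordFilt_mul_le _).trans hle)
    have hsub := pow_le_wordFilt h1Y₀ _ (aeval_sub_pow_succ_mem_pow h1 hx hq)
    exact hxm (by simpa using sub_mem (wordFilt_mono_right inf_le_left _ hqx) hsub)
  · refine hle (wordFilt_succ_le_of_pow_mul_mem hxY
      (isThinLayer_wordFilt (m := m + 1) hxY hle (by omega)) ?_ ?_)
    · exact fun z hz y hy =>
        pow_finrank_mul_mem_wordFilt hV hfaith h1 hz hy (hε₁ y hy) (hε₂ y hy)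
    · exact fun z hz y hy =>
        mul_pow_finrank_mem_wordFilt hV hfaith h1 hz hy (hε₁ y hy) (hε₂ y hy)

end UpperBound

/-! ### The dihedral group algebra -/

section DihedralRepresentations

open DihedralGroup

variable {F : Type*} [Field F] {n : ℕ}

lemma finrank_monoidAlgebra_dihedralGroup [NeZero n] :
    Module.finrank F (MonoidAlgebra F (DihedralGroup n)) = 2 * n := by
  rw [Module.finrank_eq_card_basis (MonoidAlgebra.basis (DihedralGroup n) F), DihedralGroup.card]

lemma map_eq_sum_r_add_sum_sr [NeZero n] {M : Type*} [AddCommGroup M] [Module F M]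
    (φ : MonoidAlgebra F (DihedralGroup n) →ₗ[F] M) (z : MonoidAlgebra F (DihedralGroup n)) :
    φ z = ∑ i, z.coeff (r i) • φ (MonoidAlgebra.single (r i) 1) +
      ∑ i, z.coeff (sr i) • φ (MonoidAlgebra.single (sr i) 1) := by
  induction z using MonoidAlgebra.induction_linear with
  | zero => simp
  | add f g hf hg =>
    rw [map_add, hf, hg]
    simp only [MonoidAlgebra.coeff_add, Finsupp.add_apply, add_smul, Finset.sum_add_distrib]
    abel
  | single g c =>
    have hc : (MonoidAlgebra.single g c : MonoidAlgebra F (DihedralGroup n)) =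
      c • MonoidAlgebra.single g 1 := by simp
    rw [hc, map_smul]
    rcases g with i | i
    · rw [Finset.sum_eq_single i, Finset.sum_eq_zero] <;> simp +contextual [eq_comm]
    · rw [Finset.sum_eq_zero, Finset.sum_eq_single i] <;> simp +contextual [eq_comm]

/-- The permutation representation of the dihedral group on the functions on the vertices `ZMod n`
of the `n`-gon, where `r i` sends the vertex `m` to `m + i` and `sr i` sends it to `-(m + i)`; a
group element acts on functions by composition with its inverse. -/
def vertexRep (F : Type*) [Field F] (n : ℕ) : DihedralGroup n →* Module.End F (ZMod n → F) where
  toFun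
    | r i => LinearMap.funLeft F F fun m => m - i
    | sr i => LinearMap.funLeft F F fun m => -(m + i)
  map_one' := by
    rw [DihedralGroup.one_def]
    ext v m
    simp [LinearMap.funLeft_apply]
  map_mul' g h := by
    rcases g with i | i <;> rcases h with j | j <;>
    · simp only [r_mul_r, r_mul_sr, sr_mul_r, sr_mul_sr]
      refine LinearMap.ext fun v => funext fun m => ?_
      simp only [LinearMap.funLeft_apply, Module.End.mul_apply]
      congr 1
      ring

/-- The extension of an even character `σ` of the rotations to a linear character of the dihedral
group, normalised to take the value `-1` at the reflection `sr 0`. -/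
def signChar (σ : AddChar (ZMod n) F) (hσ : ∀ s, σ (-s) = σ s) : DihedralGroup n →* F where
  toFun
    | r i => σ i
    | sr i => -σ i
  map_one' := by rw [DihedralGroup.one_def]; exact σ.map_zero_eq_one
  map_mul' g h := by
    rcases g with i | i <;> rcases h with j | j <;>
      simp [sub_eq_add_neg, AddChar.map_add_eq_mul, hσ, mul_comm]

lemma lift_signChar_apply [NeZero n] (σ : AddChar (ZMod n) F) (hσ : ∀ s, σ (-s) = σ s)
    (z : MonoidAlgebra F (DihedralGroup n)) :
    MonoidAlgebra.lift F F _ (signChar σ hσ) z =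
      ∑ i, σ i * (z.coeff (r i) - z.coeff (sr i)) := by
  rw [← AlgHom.toLinearMap_apply, map_eq_sum_r_add_sum_sr, ← Finset.sum_add_distrib]
  refine Finset.sum_congr rfl fun i _ => ?_
  simp only [AlgHom.toLinearMap_apply, MonoidAlgebra.lift_single, signChar, MonoidHom.coe_mk,
    OneHom.coe_mk, smul_eq_mul]
  ring

lemma coeff_r_add_coeff_sr_eq_zero [NeZero n] {z : MonoidAlgebra F (DihedralGroup n)}
    (hz : MonoidAlgebra.lift F _ _ (vertexRep F n) z = 0) (m j : ZMod n) :
    z.coeff (r (m - j)) + z.coeff (sr (-m - j)) = 0 := by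
  have h := map_eq_sum_r_add_sum_sr (MonoidAlgebra.lift F _ _ (vertexRep F n)).toLinearMap z
  rw [AlgHom.toLinearMap_apply, hz] at h
  have hmj := congrFun (LinearMap.congr_fun h (Pi.single j 1)) m
  have sub_eq_iff (x : ZMod n) : m - x = j ↔ x = m - j := by grind
  have neg_add_eq_iff (x : ZMod n) : -(m + x) = j ↔ x = -m - j := by grind
  simpa [vertexRep, LinearMap.funLeft_apply, Pi.single_apply, sub_eq_iff, neg_add_eq_iff,
    -neg_add_rev] using hmj.symm

lemma exists_addChar_eq_one_and_even_or_eq_neg_one (F : Type*) [Field F] (n : ℕ) [NeZero n] :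
    ∃ σ : AddChar (ZMod n) F, ∀ s, σ s = 1 ∧ Even s ∨ σ s = -1 := by
  rcases Nat.even_or_odd n with hn | ⟨k, hk⟩
  · refine ⟨AddChar.zmodChar n (ζ := -1) hn.neg_one_pow, fun s => ?_⟩
    rw [AddChar.zmodChar_apply]
    rcases Nat.even_or_odd s.val with hs | hs
    · refine .inl ⟨hs.neg_one_pow, ?_⟩
      simpa using hs.map (Nat.castRingHom (ZMod n))
    · exact .inr hs.neg_one_pow
  · have h0 : (2 * k + 1 : ZMod n) = 0 := by
      exact_mod_cast (congrArg Nat.cast hk).symm.trans (ZMod.natCast_self n)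
    exact ⟨1, fun s => .inl ⟨AddChar.one_apply s, s * (k + 1), by linear_combination -s * h0⟩⟩

lemma sum_one_add_addChar_ne_zero [NeZero n] (hn2 : (2 * n : F) ≠ 0) (σ : AddChar (ZMod n) F) :
    ∑ t, (1 + σ t) ≠ 0 := by
  have hn : (n : F) ≠ 0 := right_ne_zero_of_mul hn2
  rw [Finset.sum_add_distrib, AddChar.sum_eq_ite]
  split_ifs
  · simpa [← two_mul] using hn2
  · simpa using hn

lemma eq_zero_of_periodic_two [NeZero n] (hn2 : (2 * n : F) ≠ 0) {σ : AddChar (ZMod n) F}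
    (hσ : ∀ s, σ s = 1 ∧ Even s ∨ σ s = -1) {c : ZMod n → F} (hc : ∀ s j, c (s + 2 * j) = c s)
    (hsum : ∑ t, c t = 0) (hσsum : ∑ t, σ t * c t = 0) : c = 0 := by
  funext s
  have hterm (t : ZMod n) : (1 + σ (s + t)) * c s = c t + σ s * (σ t * c t) := by
    rcases hσ (s + t) with ⟨-, u, hu⟩ | h
    · have hst : c t = c s := by rw [← hc s (u - s)]; congr 1; linear_combination hu
      rw [AddChar.map_add_eq_mul, hst]; ring
    · rw [AddChar.map_add_eq_mul] at h ⊢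
      linear_combination (c s - c t) * h
  have h : (∑ t, (1 + σ t)) * c s = 0 :=
    calc (∑ t, (1 + σ t)) * c s = ∑ t, (1 + σ (s + t)) * c s := by
          rw [← Equiv.sum_comp (Equiv.addLeft s) fun t => 1 + σ t, Finset.sum_mul]; rfl
      _ = ∑ t, c t + σ s * ∑ t, σ t * c t := by
          simp only [hterm, Finset.sum_add_distrib, Finset.mul_sum]
      _ = 0 := by rw [hsum, hσsum, mul_zero, add_zero]
  exact (mul_eq_zero.1 h).resolve_left (sum_one_add_addChar_ne_zero hn2 σ)

lemma addChar_neg_eq_self {σ : AddChar (ZMod n) F} (hσ : ∀ s, σ s = 1 ∧ Even s ∨ σ s = -1)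
    (s : ZMod n) : σ (-s) = σ s := by
  rw [AddChar.map_neg_eq_inv]
  rcases hσ s with ⟨h, -⟩ | h <;> simp [h]

/- Being zero on the vertices makes the coefficients of the rotations `2`-periodic and the
coefficients of the reflections their negatives; the two characters remove the remaining freedom. -/
lemma eq_zero_of_lift_eq_zero [NeZero n] (hn2 : (2 * n : F) ≠ 0) {σ : AddChar (ZMod n) F}
    (hσ : ∀ s, σ s = 1 ∧ Even s ∨ σ s = -1) {z : MonoidAlgebra F (DihedralGroup n)}
    (hρz : MonoidAlgebra.lift F _ _ (vertexRep F n) z = 0)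
    (h1z : MonoidAlgebra.lift F F _
      (signChar 1 fun s => by rw [AddChar.one_apply, AddChar.one_apply]) z = 0)
    (hσz : MonoidAlgebra.lift F F _ (signChar σ (addChar_neg_eq_self hσ)) z = 0) : z = 0 := by
  have hcd := coeff_r_add_coeff_sr_eq_zero hρz
  have hd (s : ZMod n) : z.coeff (sr s) = -z.coeff (r s) := by
    have := hcd 0 (-s)
    rw [neg_zero, zero_sub, neg_neg] at this
    exact eq_neg_of_add_eq_zero_right this
  have hneg (m j : ZMod n) : z.coeff (r (m - j)) = z.coeff (r (-m - j)) := by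
    simpa [hd, add_neg_eq_zero] using hcd m j
  have hperiodic (s j : ZMod n) : z.coeff (r (s + 2 * j)) = z.coeff (r s) := by
    have h := hneg (s + j) (-j)
    rw [show s + j - -j = s + 2 * j by ring, show -(s + j) - -j = -s - 0 by ring, ← hneg] at h
    rwa [sub_zero] at h
  have htwo (τ : AddChar (ZMod n) F) : ∑ i, τ i * (z.coeff (r i) - z.coeff (sr i)) =
      2 * ∑ i, τ i * z.coeff (r i) := by
    rw [Finset.mul_sum]
    exact Finset.sum_congr rfl fun i _ => by rw [hd]; ring
  rw [lift_signChar_apply, htwo] at h1z hσz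
  have h2 : (2 : F) ≠ 0 := left_ne_zero_of_mul hn2
  have hc := eq_zero_of_periodic_two hn2 hσ (c := fun i => z.coeff (r i)) hperiodic
    (by simpa [h2] using h1z) ((mul_eq_zero.1 hσz).resolve_left h2)
  refine MonoidAlgebra.coeff_injective (Finsupp.ext fun g => ?_)
  rcases g with i | i
  · exact congrFun hc i
  · simpa [hd] using congrFun hc i

end DihedralRepresentations

section DihedralUpperBound

open DihedralGroup

lemma apply_eq_apply_zero_or_apply_one_of_periodic {α : Type*} {n : ℕ} {g : ZMod n → α}
    (hg : Function.Periodic g 2) (i : ZMod n) : g i = g 0 ∨ g i = g 1 := by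
  obtain ⟨m, rfl⟩ := ZMod.intCast_surjective i
  rcases Int.even_or_odd' m with ⟨k, rfl | rfl⟩
  · left; simpa [mul_comm] using hg.int_mul k 0
  · right; simpa [mul_comm, add_comm] using hg.int_mul k 1

variable {n : ℕ}

section Monoid

variable {M : Type*} [Monoid M] {f : DihedralGroup n →* M}

lemma map_r_periodic (hf : ∀ g h, Commute (f g) (f h)) :
    Function.Periodic (fun i => f (r i)) 2 := fun i =>
  calc f (r (i + 2)) = f (r (i + 1)) * (f (sr 0) * f (sr 1)) := by
        simp only [← map_mul, sr_mul_sr, r_mul_r]; ring_nf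
    _ = f (r (i + 1)) * (f (sr 1) * f (sr 0)) := by rw [hf]
    _ = f (r i) := by simp only [← map_mul, sr_mul_sr, r_mul_r]; ring_nf

lemma map_sr_periodic (hf : ∀ g h, Commute (f g) (f h)) :
    Function.Periodic (fun i => f (sr i)) 2 := fun i =>
  calc f (sr (i + 2)) = f (sr (i + 1)) * f (r 1) := by
        simp only [← map_mul, sr_mul_r]; ring_nf
    _ = f (r 1) * f (sr (i + 1)) := hf _ _
    _ = f (sr i) := by simp only [← map_mul, r_mul_sr]; ring_nf

end Monoid

variable {F : Type*} [Field F]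

lemma finrank_le_four_of_surjective [NeZero n] {B : Type*} [Ring B] [Algebra F B]
    {φ : MonoidAlgebra F (DihedralGroup n) →ₐ[F] B} (hφ : Function.Surjective φ)
    (hB : ∀ a b : B, Commute a b) : Module.finrank F B ≤ 4 := by
  let f : DihedralGroup n →* B := (φ : _ →* B).comp (MonoidAlgebra.of F (DihedralGroup n))
  let w : Fin 4 → B := ![f (r 0), f (r 1), f (sr 0), f (sr 1)]
  have hw (i : Fin 4) : w i ∈ Submodule.span F (Set.range w) :=
    Submodule.subset_span (Set.mem_range_self i)
  have hr (i : ZMod n) : f (r i) ∈ Submodule.span F (Set.range w) := by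
    rcases apply_eq_apply_zero_or_apply_one_of_periodic
      (map_r_periodic (f := f) fun _ _ => hB _ _) i with h | h
    · exact h ▸ hw 0
    · exact h ▸ hw 1
  have hsr (i : ZMod n) : f (sr i) ∈ Submodule.span F (Set.range w) := by
    rcases apply_eq_apply_zero_or_apply_one_of_periodic
      (map_sr_periodic (f := f) fun _ _ => hB _ _) i with h | h
    · exact h ▸ hw 2
    · exact h ▸ hw 3
  have htop : Submodule.span F (Set.range w) = ⊤ := by
    refine Submodule.eq_top_iff'.2 fun b => ?_
    obtain ⟨z, rfl⟩ := hφ b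
    rw [← AlgHom.toLinearMap_apply, map_eq_sum_r_add_sum_sr φ.toLinearMap z]
    exact add_mem (sum_mem fun i _ => Submodule.smul_mem _ _ (hr i))
      (sum_mem fun i _ => Submodule.smul_mem _ _ (hsr i))
  rw [← finrank_top, ← htop]
  exact finrank_range_le_card w

lemma Lk_eq_top (hn : 3 ≤ n) (hn2 : (2 * n : F) ≠ 0)
    {S : Set (MonoidAlgebra F (DihedralGroup n))} (hS : Algebra.adjoin F S = ⊤) :
    Lk F S n = ⊤ := by
  have : NeZero n := ⟨by omega⟩
  have : FiniteDimensional F (MonoidAlgebra F (DihedralGroup n)) :=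
    (MonoidAlgebra.basis (DihedralGroup n) F).finiteDimensional_of_finite
  obtain ⟨σ, hσ⟩ := exists_addChar_eq_one_and_even_or_eq_neg_one F n
  have hU : Algebra.adjoin F
      (Submodule.span F ({1} ∪ S) : Set (MonoidAlgebra F (DihedralGroup n))) = ⊤ := by
    rw [Algebra.adjoin_span]
    exact top_le_iff.1 (hS ▸ Algebra.adjoin_mono Set.subset_union_right)
  refine pow_eq_top_of_finrank_le (by omega) finrank_monoidAlgebra_dihedralGroup.le
    (V := ZMod n → F) (by simp) (fun _ => eq_zero_of_lift_eq_zero hn2 hσ) (fun I _ hI => ?_)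
    (Submodule.one_le.2 (Submodule.subset_span (by simp))) hU
  exact (finrank_le_four_of_surjective (Ideal.Quotient.mkₐ_surjective F I) hI).trans (by omega)

end DihedralUpperBound

/-! ### A generating set of length `n` -/

section DihedralLowerBound

open DihedralGroup

variable {F : Type*} [Field F] {n : ℕ}

/-- The two-sided walk through the Cayley graph of the dihedral group for the reflections `sr 0` and
`sr 1`, closed after `2 * n` steps: the even number `2 * i` goes to `r i`, the odd number
`2 * i - 1` to `sr i`. -/
def zigzag (n : ℕ) (m : ℤ) : DihedralGroup n :=
  if Even m then r (m / 2 : ℤ) else sr ((m + 1) / 2 : ℤ)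

lemma zigzag_two_mul (i : ℤ) : zigzag n (2 * i) = r i := by
  simp [zigzag]

lemma zigzag_two_mul_sub_one (i : ℤ) : zigzag n (2 * i - 1) = sr i := by
  have : ¬ Even (2 * i - 1) := by grind
  simp [zigzag, this]

lemma exists_sr_mul_zigzag_eq {i : ZMod n} (hi : i = 0 ∨ i = 1) (m : ℤ) :
    ∃ m' ∈ Set.Icc (m - 1) (m + 1), sr i * zigzag n m = zigzag n m' := by
  obtain ⟨k, rfl | rfl⟩ : ∃ k, m = 2 * k ∨ m = 2 * k - 1 := ⟨(m + 1) / 2, by omega⟩ <;>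
    rcases hi with rfl | rfl
  · refine ⟨2 * k - 1, by constructor <;> omega, ?_⟩
    rw [zigzag_two_mul, zigzag_two_mul_sub_one, sr_mul_r, zero_add]
  · refine ⟨2 * (k + 1) - 1, by constructor <;> omega, ?_⟩
    rw [zigzag_two_mul, zigzag_two_mul_sub_one, sr_mul_r, add_comm, Int.cast_add, Int.cast_one]
  · refine ⟨2 * k, by constructor <;> omega, ?_⟩
    rw [zigzag_two_mul, zigzag_two_mul_sub_one, sr_mul_sr, sub_zero]
  · refine ⟨2 * (k - 1), by constructor <;> omega, ?_⟩
    rw [zigzag_two_mul, zigzag_two_mul_sub_one, sr_mul_sr, Int.cast_sub, Int.cast_one]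

/-- The two reflections `sr 0` and `sr 1` as elements of the group algebra. They attain the maximal
length of a generating set. -/
def reflections (F : Type*) [Field F] (n : ℕ) : Set (MonoidAlgebra F (DihedralGroup n)) :=
  {MonoidAlgebra.single (sr 0) 1, MonoidAlgebra.single (sr 1) 1}

lemma adjoin_reflections [NeZero n] : Algebra.adjoin F (reflections F n) = ⊤ := by
  set B := Algebra.adjoin F (reflections F n)
  have hsr0 : MonoidAlgebra.single (sr 0) 1 ∈ B := Algebra.subset_adjoin (.inl rfl)
  have hsr1 : MonoidAlgebra.single (sr 1) 1 ∈ B := Algebra.subset_adjoin (.inr rfl)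
  have hr1 : MonoidAlgebra.single (r 1) 1 ∈ B := by
    simpa [MonoidAlgebra.single_mul_single] using mul_mem hsr0 hsr1
  have hr (i : ZMod n) : MonoidAlgebra.single (r i) 1 ∈ B := by
    have := pow_mem hr1 i.val
    rwa [MonoidAlgebra.single_pow, one_pow, r_one_pow, ZMod.natCast_zmod_val] at this
  have hsr (i : ZMod n) : MonoidAlgebra.single (sr i) 1 ∈ B := by
    simpa [MonoidAlgebra.single_mul_single] using mul_mem hsr0 (hr i)
  refine eq_top_iff.2 fun z _ => ?_
  rw [← LinearMap.id_apply (R := F) z, map_eq_sum_r_add_sum_sr LinearMap.id z]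
  exact add_mem (sum_mem fun i _ => B.smul_mem (hr i) _) (sum_mem fun i _ => B.smul_mem (hsr i) _)

open Classical in
lemma Lk_reflections_le_span_zigzag (k : ℕ) : Lk F (reflections F n) k ≤ Submodule.span F
    ((Finset.Icc (-k : ℤ) k).image fun m => MonoidAlgebra.single (zigzag n m) (1 : F)) := by
  induction k with
  | zero =>
    have : zigzag n 0 = 1 := by simpa using zigzag_two_mul (n := n) 0
    rw [Lk, pow_zero, Submodule.one_le]
    exact Submodule.subset_span (by simp [this, MonoidAlgebra.one_def])
  | succ k ih =>
    rw [Lk, pow_succ']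
    refine (mul_le_mul' le_rfl ih).trans ?_
    rw [Submodule.span_mul_span, Submodule.span_le]
    rintro _ ⟨u, hu, v, hv, rfl⟩
    obtain ⟨m, hm, rfl⟩ := Finset.mem_image.1 (Finset.mem_coe.1 hv)
    suffices ∃ m' ∈ Set.Icc (m - 1) (m + 1),
        u * MonoidAlgebra.single (zigzag n m) 1 = MonoidAlgebra.single (zigzag n m') 1 by
      obtain ⟨m', ⟨hm₁, hm₂⟩, h⟩ := this
      rw [Finset.mem_Icc] at hm
      exact Submodule.subset_span <| Finset.mem_coe.2 <| Finset.mem_image.2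
        ⟨m', Finset.mem_Icc.2 ⟨by push_cast; omega, by push_cast; omega⟩, h.symm⟩
    obtain rfl | ⟨i, hi, rfl⟩ : u = 1 ∨
        ∃ i : ZMod n, (i = 0 ∨ i = 1) ∧ u = MonoidAlgebra.single (sr i) 1 := by
      rcases hu with hu | hu | hu
      exacts [.inl hu, .inr ⟨0, .inl rfl, hu⟩, .inr ⟨1, .inr rfl, hu⟩]
    · exact ⟨m, by simp, one_mul _⟩
    · obtain ⟨m', hm', h⟩ := exists_sr_mul_zigzag_eq hi m
      exact ⟨m', hm', by rw [MonoidAlgebra.single_mul_single, h, one_mul]⟩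

lemma Lk_reflections_ne_top [NeZero n] {k : ℕ} (hk : k < n) : Lk F (reflections F n) k ≠ ⊤ := by
  classical
  intro h
  have hspan := Lk_reflections_le_span_zigzag (F := F) (n := n) k
  rw [h, top_le_iff] at hspan
  let s := (Finset.Icc (-k : ℤ) k).image fun m => MonoidAlgebra.single (zigzag n m) (1 : F)
  have hcard : s.card ≤ 2 * k + 1 := Finset.card_image_le.trans (by rw [Int.card_Icc]; omega)
  have hfinrank : Module.finrank F (MonoidAlgebra F (DihedralGroup n)) ≤ s.card := by
    rw [← finrank_top, ← hspan]
    exact finrank_span_finset_le_card s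
  rw [finrank_monoidAlgebra_dihedralGroup] at hfinrank
  omega

end DihedralLowerBound

theorem stmt_19 (F : Type*) [Field F] (n : ℕ) (hn : 3 ≤ n)
    (hchar : ¬ (ringChar F ∣ 2 * n)) :
    (∀ S : Set (MonoidAlgebra F (DihedralGroup n)),
        Algebra.adjoin F S = ⊤ → lenS F S ≤ n) ∧
    ∃ S : Set (MonoidAlgebra F (DihedralGroup n)),
        Algebra.adjoin F S = ⊤ ∧ lenS F S = n := by
  have hn2 : (2 * n : F) ≠ 0 := fun h => hchar ((ringChar.spec F _).1 (by exact_mod_cast h))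
  have : NeZero n := ⟨by omega⟩
  have hle (S : Set (MonoidAlgebra F (DihedralGroup n))) (hS : Algebra.adjoin F S = ⊤) :
      lenS F S ≤ n := Nat.sInf_le (Lk_eq_top hn hn2 hS)
  have hLk : Lk F (reflections F n) (lenS F (reflections F n)) = ⊤ :=
    Nat.sInf_mem (s := {k | Lk F (reflections F n) k = ⊤})
      ⟨n, Lk_eq_top hn hn2 adjoin_reflections⟩
  exact ⟨hle, reflections F n, adjoin_reflections,
    (hle _ adjoin_reflections).antisymm (not_lt.1 fun hlt => Lk_reflections_ne_top hlt hLk)⟩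
end
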